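/- There exist constants δ₀ ∈ (0,1) and C > 0, independent of k, λ and δ, such that for every λ ∈ ℝ, every 0 < δ ≤ δ₀, every k = (k₁,k₃) ∈ ℤ² with |k| ≥ 1, every f ∈ H¹(I) with f(−1) = f(1) = 0, and every solution (Φ,W) of the Rayleigh problem (1−y²−λ+iδ)W + 2Φ = f, (∂_y² − |k|²)Φ = W, Φ(±1) = 0, one has ‖(∂_y,|k|)Φ‖_{L²} + δ^{1/2}‖W‖_{L²} + δ^{3/2}(|1−λ|+δ)^{−1/2}‖W'‖_{L²} ≤ C ‖(∂_y,|k|)f‖_{L²}. -/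

import Mathlib

open Real MeasureTheory

noncomputable section

/-- `|k| = sqrt (k₁² + k₃²)` for `k = (k₁,k₃) ∈ ℤ²`. -/
def kabs (k₁ k₃ : ℤ) : ℝ := Real.sqrt ((k₁ : ℝ) ^ 2 + (k₃ : ℝ) ^ 2)

/-- The `L²` norm on the interval `(-1,1)`. -/
def l2 (f : ℝ → ℂ) : ℝ := Real.sqrt (∫ y in (-1:ℝ)..1, ‖f y‖ ^ 2)

/-- `‖(∂_y,|k|)f‖_{L²} = (‖f'‖² + |k|²‖f‖²)^{1/2}`. -/
def hk (k₁ k₃ : ℤ) (f : ℝ → ℂ) : ℝ :=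
  Real.sqrt ((∫ y in (-1:ℝ)..1, ‖deriv f y‖ ^ 2) +
    (kabs k₁ k₃) ^ 2 * ∫ y in (-1:ℝ)..1, ‖f y‖ ^ 2)

/-!
The problem is invariant under `y ↦ -y`, so it splits into the even and odd parts of the data,
which live on `[0, 1]`. There put `g = 2Φ - f`, so that `W = -g / (1 - y² - λ + iδ)`. Pairing `W`
with `g` gives `2 ∫ (1 - y² - λ + iδ) |W|² = ‖g‖²_{H¹} + ⟨g, f⟩_{H¹}`, whose imaginary part bounds
`δ ‖W‖²` and, if `1 - λ ≲ δ`, whose real part then bounds `‖g‖_{H¹}`.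

Otherwise write `1 - λ = a²` and `q = Re 1 / (a² - y² + iδ)`. The real part becomes
`‖g‖²_{H¹} ≤ 2 ∫ q |g|² + ⋯`, and after subtracting `g a` it is controlled by a Hardy inequality on
`[0, a]` with ground state `a² + δ - y²`. It yields coercivity up to `|g a|²` and `|g 0|²`, together
with control of the Hardy defect, which measures how far `g - g a` is from a multiple of the ground
state. The imaginary part bounds `|g a|²`, since `Im 1 / (a² - y² + iδ)` concentrates at `a`. What
remains is `g 0`, the amplitude of the ground state: it vanishes for odd data, is dominated by
`k² ‖g‖²` if `k a` is not small, and otherwise is read off, for even data, by testing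
`Φ'' - k² Φ = W` with a cutoff that is constant on `[0, a]`.

The bound on `W'` follows by differentiating the equation.
-/

section Interval

open Set

theorem sq_integral_mul_le {x y : ℝ} (hxy : x ≤ y) {p r : ℝ → ℝ}
    (hp : ContinuousOn p (Icc x y)) (hr : ContinuousOn r (Icc x y)) :
    (∫ t in x..y, p t * r t) ^ 2 ≤ (∫ t in x..y, p t ^ 2) * ∫ t in x..y, r t ^ 2 := by
  have quadratic_nonneg : ∀ s : ℝ, 0 ≤ (∫ t in x..y, p t ^ 2) * (s * s)
      + (2 * ∫ t in x..y, p t * r t) * s + ∫ t in x..y, r t ^ 2 := by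
    intro s
    have expand : ∫ t in x..y, (s * p t + r t) ^ 2
        = ∫ t in x..y, ((s ^ 2 * p t ^ 2 + 2 * s * (p t * r t)) + r t ^ 2) := by
      congr 1; ext t; ring
    have nonneg : 0 ≤ ∫ t in x..y, (s * p t + r t) ^ 2 :=
      intervalIntegral.integral_nonneg hxy fun t _ => sq_nonneg _
    rw [expand, intervalIntegral.integral_add, intervalIntegral.integral_add,
      intervalIntegral.integral_const_mul, intervalIntegral.integral_const_mul] at nonneg
    · linarith
    all_goals exact ContinuousOn.intervalIntegrable_of_Icc hxy (by fun_prop)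
  have := discrim_le_zero quadratic_nonneg
  rw [discrim] at this
  linarith

theorem integral_mono_interval_of_continuous {u : ℝ → ℝ} (hu : Continuous u) (h0 : ∀ t, 0 ≤ u t)
    {a b c d : ℝ} (hca : c ≤ a) (hab : a ≤ b) (hbd : b ≤ d) :
    ∫ t in a..b, u t ≤ ∫ t in c..d, u t :=
  intervalIntegral.integral_mono_interval hca hab hbd (Filter.Eventually.of_forall h0)
    (hu.intervalIntegrable _ _)

theorem norm_sub_sq_le_mul_integral_norm_deriv_sq {E : Type*} [NormedAddCommGroup E]
    [NormedSpace ℝ E] [CompleteSpace E] {g : ℝ → E} (hg : ContDiff ℝ 1 g) {x y : ℝ} (h : x ≤ y) :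
    ‖g y - g x‖ ^ 2 ≤ (y - x) * ∫ t in x..y, ‖deriv g t‖ ^ 2 := by
  have hc : Continuous (deriv g) := hg.continuous_deriv le_rfl
  have ftc : ∫ t in x..y, deriv g t = g y - g x :=
    intervalIntegral.integral_deriv_eq_sub (fun t _ => hg.differentiable one_ne_zero t)
      (hc.intervalIntegrable _ _)
  calc ‖g y - g x‖ ^ 2 ≤ (∫ t in x..y, 1 * ‖deriv g t‖) ^ 2 := by
        simp only [← ftc, one_mul]
        gcongr
        exact intervalIntegral.norm_integral_le_integral_norm h
    _ ≤ (∫ _ in x..y, (1 : ℝ) ^ 2) * ∫ t in x..y, ‖deriv g t‖ ^ 2 :=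
        sq_integral_mul_le h continuousOn_const hc.norm.continuousOn
    _ = (y - x) * ∫ t in x..y, ‖deriv g t‖ ^ 2 := by simp

theorem norm_sub_le_sqrt_integral_mul_sqrt_abs_sub {E : Type*} [NormedAddCommGroup E]
    [NormedSpace ℝ E] [CompleteSpace E] {g : ℝ → E} (hg : ContDiff ℝ 1 g) {x y l r : ℝ}
    (hx : x ∈ Icc l r) (hy : y ∈ Icc l r) :
    ‖g y - g x‖ ≤ √(∫ t in l..r, ‖deriv g t‖ ^ 2) * √|y - x| := by
  wlog hxy : x ≤ y generalizing x y
  · rw [norm_sub_rev, abs_sub_comm]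
    exact this hy hx (le_of_not_ge hxy)
  have hc : Continuous (deriv g) := hg.continuous_deriv le_rfl
  rw [abs_of_nonneg (sub_nonneg.2 hxy), ← Real.sqrt_mul' _ (sub_nonneg.2 hxy), mul_comm]
  refine Real.le_sqrt_of_sq_le ((norm_sub_sq_le_mul_integral_norm_deriv_sq hg hxy).trans ?_)
  exact mul_le_mul_of_nonneg_left (integral_mono_interval_of_continuous (by fun_prop)
    (fun t => sq_nonneg _) hx.1 hxy hy.2) (sub_nonneg.2 hxy)

theorem intervalIntegrable_abs_sub_rpow {r : ℝ} (hr : -1 < r) (a x y : ℝ) :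
    IntervalIntegrable (fun t => |t - a| ^ r) volume x y := by
  have pos : ∀ c : ℝ, 0 ≤ c → IntervalIntegrable (fun z => |z| ^ r) volume 0 c := fun c hc =>
    (intervalIntegral.intervalIntegrable_rpow' hr).congr fun z hz => by
      rw [uIoc_of_le hc] at hz
      simp only [abs_of_pos hz.1]
  have all : ∀ c : ℝ, IntervalIntegrable (fun z => |z| ^ r) volume 0 c := by
    intro c
    rcases le_total 0 c with hc | hc
    · exact pos c hc
    · simpa using (pos (-c) (neg_nonneg.2 hc)).comp_sub_left 0
  simpa using ((all (x - a)).symm.trans (all (y - a))).comp_sub_right a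

theorem integral_abs_rpow_neg_half {a : ℝ} (ha : 0 ≤ a) :
    ∫ z in (0 : ℝ)..a, |z| ^ (-(1 : ℝ) / 2) = 2 * √a := by
  have : ∫ z in (0 : ℝ)..a, |z| ^ (-(1 : ℝ) / 2) = ∫ z in (0 : ℝ)..a, z ^ (-(1 : ℝ) / 2) :=
    intervalIntegral.integral_congr fun z hz => by
      rw [uIcc_of_le ha] at hz
      simp only [abs_of_nonneg hz.1]
  rw [this, integral_rpow (Or.inl (by norm_num)), Real.sqrt_eq_rpow]
  rw [show -(1 : ℝ) / 2 + 1 = 1 / 2 by norm_num, Real.zero_rpow (by norm_num)]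
  ring

theorem integral_abs_sub_rpow_neg_half_left {a : ℝ} (ha : 0 ≤ a) :
    ∫ y in (0 : ℝ)..a, |y - a| ^ (-(1 : ℝ) / 2) = 2 * √a := by
  simp only [abs_sub_comm _ a]
  rw [intervalIntegral.integral_comp_sub_left (fun z => |z| ^ (-(1 : ℝ) / 2)) a, sub_self, sub_zero,
    integral_abs_rpow_neg_half ha]

theorem integral_abs_sub_rpow_neg_half_right {a : ℝ} (ha : 0 ≤ a) :
    ∫ y in a..(2 * a), |y - a| ^ (-(1 : ℝ) / 2) = 2 * √a := by
  rw [intervalIntegral.integral_comp_sub_right (fun z => |z| ^ (-(1 : ℝ) / 2)) a, sub_self,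
    show 2 * a - a = a by ring, integral_abs_rpow_neg_half ha]

end Interval

section Hardy

open Set

variable {E : Type*} [NormedAddCommGroup E] [InnerProductSpace ℝ E] {G : ℝ → E}

theorem integral_norm_deriv_sub_logDeriv_smul_sq (hG : ContDiff ℝ 1 G) {x b : ℝ} (hb : x ≤ b)
    {φ φ' φ'' : ℝ → ℝ} (hφ : ∀ y ∈ Icc x b, HasDerivAt φ (φ' y) y)
    (hφ' : ∀ y ∈ Icc x b, HasDerivAt φ' (φ'' y) y) (hφ'' : ContinuousOn φ'' (Icc x b))
    (h0 : ∀ y ∈ Icc x b, φ y ≠ 0) :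
    ∫ y in x..b, ‖deriv G y - (φ' y / φ y) • G y‖ ^ 2
      = (∫ y in x..b, ‖deriv G y‖ ^ 2) + (∫ y in x..b, φ'' y / φ y * ‖G y‖ ^ 2)
        - (φ' b / φ b * ‖G b‖ ^ 2 - φ' x / φ x * ‖G x‖ ^ 2) := by
  have hG' : Continuous (deriv G) := hG.continuous_deriv le_rfl
  have hGc : Continuous G := hG.continuous
  have φ_cont : ContinuousOn φ (Icc x b) := HasDerivAt.continuousOn hφ
  have φ'_cont : ContinuousOn φ' (Icc x b) := HasDerivAt.continuousOn hφ'
  have inner_cont : Continuous fun y => (2 * inner ℝ (G y) (deriv G y) : ℝ) := by fun_prop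
  have flux_deriv : ∀ y ∈ uIcc x b, HasDerivAt (fun y => φ' y / φ y * ‖G y‖ ^ 2)
      ((φ'' y * φ y - φ' y * φ' y) / φ y ^ 2 * ‖G y‖ ^ 2
        + φ' y / φ y * (2 * inner ℝ (G y) (deriv G y))) y := by
    intro y hy
    rw [uIcc_of_le hb] at hy
    exact ((hφ' y hy).div (hφ y hy) (h0 y hy)).mul
      (hG.differentiable one_ne_zero y).hasDerivAt.norm_sq
  have flux_cont : ContinuousOn (fun y => (φ'' y * φ y - φ' y * φ' y) / φ y ^ 2 * ‖G y‖ ^ 2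
      + φ' y / φ y * (2 * inner ℝ (G y) (deriv G y))) (Icc x b) := by
    have sq_ne : ∀ y ∈ Icc x b, φ y ^ 2 ≠ 0 := fun y hy => pow_ne_zero 2 (h0 y hy)
    fun_prop (disch := assumption)
  rw [← intervalIntegral.integral_eq_sub_of_hasDerivAt flux_deriv
      (flux_cont.intervalIntegrable_of_Icc hb),
    ← intervalIntegral.integral_add, ← intervalIntegral.integral_sub]
  · refine intervalIntegral.integral_congr fun y hy => ?_
    have := h0 y (uIcc_of_le hb ▸ hy)
    simp only [norm_sub_sq_real, norm_smul, mul_pow, inner_smul_right,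
      real_inner_comm (deriv G y) (G y), Real.norm_eq_abs, sq_abs]
    field_simp
    ring
  · exact ContinuousOn.intervalIntegrable_of_Icc hb (by fun_prop (disch := assumption))
  · exact flux_cont.intervalIntegrable_of_Icc hb
  all_goals exact ContinuousOn.intervalIntegrable_of_Icc hb (by fun_prop (disch := assumption))

variable {b : ℝ}

theorem integral_norm_deriv_sub_parabola_sq (hG : ContDiff ℝ 1 G) (hb : 0 ≤ b) (hGb : G b = 0)
    {B C : ℝ} (hpos : ∀ y ∈ Icc 0 b, 0 < C + B * y - y ^ 2) :
    ∫ y in (0 : ℝ)..b, ‖deriv G y - ((B - 2 * y) / (C + B * y - y ^ 2)) • G y‖ ^ 2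
      = (∫ y in (0 : ℝ)..b, ‖deriv G y‖ ^ 2)
        - 2 * (∫ y in (0 : ℝ)..b, ‖G y‖ ^ 2 / (C + B * y - y ^ 2)) + B / C * ‖G 0‖ ^ 2 := by
  have φ_deriv : ∀ y ∈ Icc 0 b, HasDerivAt (fun y => C + B * y - y ^ 2) (B - 2 * y) y := fun y _ =>
    ((((hasDerivAt_id y).const_mul B).const_add C).sub (hasDerivAt_pow 2 y)).congr_deriv (by simp)
  have φ'_deriv : ∀ y ∈ Icc 0 b, HasDerivAt (fun y => B - 2 * y) (-2) y := fun y _ => by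
    simpa using ((hasDerivAt_id y).const_mul 2).const_sub B
  rw [integral_norm_deriv_sub_logDeriv_smul_sq hG hb φ_deriv φ'_deriv continuousOn_const
      fun y hy => (hpos y hy).ne',
    hGb, ← intervalIntegral.integral_const_mul]
  simp only [neg_div, neg_mul, div_mul_eq_mul_div, intervalIntegral.integral_neg, mul_div_assoc,
    intervalIntegral.integral_const_mul, norm_zero, zero_pow two_ne_zero, mul_zero, sub_zero,
    add_zero]
  ring

/-- The derivative of the profile `(g - g b) / (c - y²)`, multiplied by `c - y²`. Its `L²` norm on
`[0, b]` is the deficit in the Hardy inequality whose ground state is `c - y²`. -/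
def hardyDefect (c b : ℝ) (g : ℝ → E) (y : ℝ) : E :=
  deriv g y + (2 * y / (c - y ^ 2)) • (g y - g b)

theorem sub_sq_pos_of_mem_Icc {c : ℝ} (hbc : b ^ 2 < c) {y : ℝ} (hy : y ∈ Icc 0 b) :
    0 < c - y ^ 2 := by
  have := pow_le_pow_left₀ hy.1 hy.2 2
  linarith

theorem continuousOn_hardyDefect {c : ℝ} (hG : ContDiff ℝ 1 G) (hbc : b ^ 2 < c) :
    ContinuousOn (hardyDefect c b G) (Icc 0 b) := by
  have hG' : Continuous (deriv G) := hG.continuous_deriv le_rfl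
  have hGc : Continuous G := hG.continuous
  have : ∀ y ∈ Icc 0 b, c - y ^ 2 ≠ 0 := fun y hy => (sub_sq_pos_of_mem_Icc hbc hy).ne'
  unfold hardyDefect
  fun_prop (disch := assumption)

theorem integral_norm_hardyDefect_sq {c : ℝ} (hG : ContDiff ℝ 1 G) (hb : 0 ≤ b)
    (hbc : b ^ 2 < c) :
    ∫ y in (0 : ℝ)..b, ‖hardyDefect c b G y‖ ^ 2 = (∫ y in (0 : ℝ)..b, ‖deriv G y‖ ^ 2)
      - 2 * ∫ y in (0 : ℝ)..b, ‖G y - G b‖ ^ 2 / (c - y ^ 2) := by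
  have := integral_norm_deriv_sub_parabola_sq (hG.sub (contDiff_const (c := G b))) hb (sub_self _)
    (B := 0) (C := c) fun y hy => by simpa using sub_sq_pos_of_mem_Icc hbc hy
  simpa [hardyDefect, deriv_sub_const, neg_div] using this

-- The ground state `(A - y) * (y + A / 2) ≤ 3 / 4 * (A ^ 2 - y ^ 2)` improves the constant `2`
-- belonging to `A ^ 2 - y ^ 2`, at the price of a boundary term at `0`.
theorem mul_integral_norm_sq_div_sub_sq_le (hG : ContDiff ℝ 1 G) {A : ℝ} (hb : 0 ≤ b) (hA : b < A)
    (hGb : G b = 0) :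
    (8 / 3) * (∫ y in (0 : ℝ)..b, ‖G y‖ ^ 2 / (A ^ 2 - y ^ 2))
      ≤ (∫ y in (0 : ℝ)..b, ‖deriv G y‖ ^ 2) + ‖G 0‖ ^ 2 / A := by
  have hA0 : 0 < A := hb.trans_lt hA
  have hGc := hG.continuous
  have factor : ∀ y : ℝ, A ^ 2 / 2 + A / 2 * y - y ^ 2 = (A - y) * (y + A / 2) := fun y => by ring
  have pos : ∀ y ∈ Icc 0 b, 0 < A ^ 2 / 2 + A / 2 * y - y ^ 2 := fun y hy => by
    rw [factor]
    exact mul_pos (by linarith [hy.2]) (by linarith [hy.1])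
  have pos' : ∀ y ∈ Icc 0 b, 0 < A ^ 2 - y ^ 2 := fun y hy =>
    sub_sq_pos_of_mem_Icc (pow_lt_pow_left₀ hA hb two_ne_zero) hy
  have compare : 4 / 3 * (∫ y in (0 : ℝ)..b, ‖G y‖ ^ 2 / (A ^ 2 - y ^ 2))
      ≤ ∫ y in (0 : ℝ)..b, ‖G y‖ ^ 2 / (A ^ 2 / 2 + A / 2 * y - y ^ 2) := by
    rw [← intervalIntegral.integral_const_mul]
    refine intervalIntegral.integral_mono_on hb
      (ContinuousOn.intervalIntegrable_of_Icc hb (continuousOn_const.mul (ContinuousOn.div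
        (by fun_prop) (by fun_prop) fun y hy => (pos' y hy).ne')))
      (ContinuousOn.intervalIntegrable_of_Icc hb (ContinuousOn.div
        (by fun_prop) (by fun_prop) fun y hy => (pos y hy).ne')) fun y hy => ?_
    have : A ^ 2 / 2 + A / 2 * y - y ^ 2 ≤ 3 / 4 * (A ^ 2 - y ^ 2) := by
      linarith [sq_nonneg (A - y)]
    calc 4 / 3 * (‖G y‖ ^ 2 / (A ^ 2 - y ^ 2)) = ‖G y‖ ^ 2 / (3 / 4 * (A ^ 2 - y ^ 2)) := by
          field_simp
      _ ≤ ‖G y‖ ^ 2 / (A ^ 2 / 2 + A / 2 * y - y ^ 2) :=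
          div_le_div_of_nonneg_left (by positivity) (pos y hy) this
  have square_nonneg : 0 ≤ ∫ y in (0 : ℝ)..b, ‖deriv G y
      - ((A / 2 - 2 * y) / (A ^ 2 / 2 + A / 2 * y - y ^ 2)) • G y‖ ^ 2 :=
    intervalIntegral.integral_nonneg hb fun y _ => sq_nonneg _
  rw [integral_norm_deriv_sub_parabola_sq hG hb hGb pos,
    show A / 2 / (A ^ 2 / 2) * ‖G 0‖ ^ 2 = ‖G 0‖ ^ 2 / A by field_simp] at square_nonneg
  linarith

theorem integral_norm_deriv_sq_le_hardyDefect (hG : ContDiff ℝ 1 G) {A : ℝ} (hb : 0 ≤ b)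
    (hA : b < A) :
    ∫ y in (0 : ℝ)..b, ‖deriv G y‖ ^ 2
      ≤ 4 * (∫ y in (0 : ℝ)..b, ‖hardyDefect (A ^ 2) b G y‖ ^ 2) + 3 * (‖G 0 - G b‖ ^ 2 / A) := by
  have defect := integral_norm_hardyDefect_sq hG hb (pow_lt_pow_left₀ hA hb two_ne_zero)
  have improved := mul_integral_norm_sq_div_sub_sq_le (hG.sub (contDiff_const (c := G b))) hb hA
    (sub_self _)
  simp only [deriv_sub_const] at improved
  linarith

end Hardy

section Kernel

open Set

/-- The real part of `1 / (a² - y² + iδ)`. -/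
def reKernel (a δ y : ℝ) : ℝ := (a ^ 2 - y ^ 2) / ((a ^ 2 - y ^ 2) ^ 2 + δ ^ 2)

/-- The imaginary part of `1 / (a² - y² + iδ)`, with its sign changed so that it is positive. -/
def imKernel (a δ y : ℝ) : ℝ := δ / ((a ^ 2 - y ^ 2) ^ 2 + δ ^ 2)

variable {a δ y z : ℝ}

theorem continuous_reKernel (hδ : 0 < δ) : Continuous (reKernel a δ) :=
  Continuous.div (by fun_prop) (by fun_prop) fun y => by positivity

theorem continuous_imKernel (hδ : 0 < δ) : Continuous (imKernel a δ) :=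
  Continuous.div (by fun_prop) (by fun_prop) fun y => by positivity

theorem imKernel_nonneg (hδ : 0 < δ) (y : ℝ) : 0 ≤ imKernel a δ y := by
  unfold imKernel
  positivity

theorem reKernel_nonneg (hy : 0 ≤ y) (hya : y ≤ a) : 0 ≤ reKernel a δ y :=
  div_nonneg (sub_nonneg.2 (pow_le_pow_left₀ hy hya 2)) (by positivity)

theorem reKernel_nonpos (ha : 0 ≤ a) (hya : a ≤ y) : reKernel a δ y ≤ 0 :=
  div_nonpos_of_nonpos_of_nonneg (sub_nonpos.2 (pow_le_pow_left₀ ha hya 2)) (by positivity)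

theorem reKernel_le (hδ : 0 < δ) (hy : 0 ≤ y) (hya : y ≤ a) :
    reKernel a δ y ≤ 1 / (a ^ 2 + δ - y ^ 2) + imKernel a δ y := by
  have hs : 0 ≤ a ^ 2 - y ^ 2 := sub_nonneg.2 (pow_le_pow_left₀ hy hya 2)
  unfold reKernel imKernel
  rw [show a ^ 2 + δ - y ^ 2 = (a ^ 2 - y ^ 2) + δ by ring]
  set s := a ^ 2 - y ^ 2
  rw [div_add_div _ _ (by positivity) (by positivity),
    div_le_div_iff₀ (by positivity) (by positivity)]
  have hN : 0 ≤ s ^ 2 + δ ^ 2 := by positivity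
  nlinarith [mul_nonneg hN (sq_nonneg δ), mul_nonneg hN hs]

theorem abs_reKernel_mul_le (ha : 0 < a) (hδ : 0 < δ) (hy : 0 ≤ y) :
    |reKernel a δ y| * (a * |y - a|) ≤ 1 := by
  have factor : |a ^ 2 - y ^ 2| = (a + y) * |y - a| := by
    rw [sq_sub_sq, abs_mul, abs_of_pos (by linarith), abs_sub_comm]
  have dist : a * |y - a| ≤ |a ^ 2 - y ^ 2| := by
    rw [factor]
    gcongr
    linarith
  unfold reKernel
  rw [abs_div, abs_of_pos (show 0 < (a ^ 2 - y ^ 2) ^ 2 + δ ^ 2 by positivity),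
    div_mul_eq_mul_div, div_le_one (by positivity)]
  calc |a ^ 2 - y ^ 2| * (a * |y - a|) ≤ |a ^ 2 - y ^ 2| * |a ^ 2 - y ^ 2| := by gcongr
    _ = (a ^ 2 - y ^ 2) ^ 2 := by rw [abs_mul_abs_self, ← sq]
    _ ≤ (a ^ 2 - y ^ 2) ^ 2 + δ ^ 2 := le_add_of_nonneg_right (sq_nonneg δ)

theorem abs_reKernel_mul_sqrt_le (ha : 0 < a) (hδ : 0 < δ) (hy : 0 ≤ y) :
    |reKernel a δ y| * √|y - a| ≤ 1 / a * |y - a| ^ (-(1 : ℝ) / 2) := by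
  have bound := abs_reKernel_mul_le ha hδ hy
  rcases (abs_nonneg (y - a)).eq_or_lt with h0 | h0
  · simp [← h0]
  · have inv_sqrt : |y - a| ^ (-(1 : ℝ) / 2) = 1 / √|y - a| := by
      rw [neg_div, Real.rpow_neg h0.le, ← Real.sqrt_eq_rpow, one_div]
    rw [inv_sqrt, div_mul_div_comm, one_mul, le_div_iff₀ (by positivity)]
    calc |reKernel a δ y| * √|y - a| * (a * √|y - a|)
        = |reKernel a δ y| * (a * (√|y - a| * √|y - a|)) := by ring
      _ ≤ 1 := by rwa [Real.mul_self_sqrt h0.le]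

theorem integral_abs_reKernel_mul_norm_le {F : Type*} [NormedAddCommGroup F] {v : ℝ → F}
    (ha : 0 < a) (hδ : 0 < δ) {x : ℝ} (hx : 0 ≤ x) (hxy : x ≤ y)
    (hv : ContinuousOn v (Icc x y)) {c : ℝ} (hc : 0 ≤ c)
    (holder : ∀ t ∈ Icc x y, ‖v t‖ ≤ c * √|t - a|) :
    ∫ t in x..y, |reKernel a δ t| * ‖v t‖ ≤ c / a * ∫ t in x..y, |t - a| ^ (-(1 : ℝ) / 2) := by
  have hq := continuous_reKernel (a := a) hδ
  rw [← intervalIntegral.integral_const_mul]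
  refine intervalIntegral.integral_mono_on hxy
    (ContinuousOn.intervalIntegrable_of_Icc hxy (by fun_prop))
    ((intervalIntegrable_abs_sub_rpow (by norm_num) a x y).const_mul _) fun t ht => ?_
  calc |reKernel a δ t| * ‖v t‖ ≤ |reKernel a δ t| * (c * √|t - a|) := by
        gcongr
        exact holder t ht
    _ = c * (|reKernel a δ t| * √|t - a|) := by ring
    _ ≤ c * (1 / a * |t - a| ^ (-(1 : ℝ) / 2)) :=
        mul_le_mul_of_nonneg_left (abs_reKernel_mul_sqrt_le ha hδ (hx.trans ht.1)) hc
    _ = c / a * |t - a| ^ (-(1 : ℝ) / 2) := by ring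

theorem integral_abs_reKernel_mul_norm_le_left {F : Type*} [NormedAddCommGroup F] {v : ℝ → F}
    (ha : 0 < a) (hδ : 0 < δ) (hv : ContinuousOn v (Icc 0 a)) {c : ℝ} (hc : 0 ≤ c)
    (holder : ∀ t ∈ Icc 0 a, ‖v t‖ ≤ c * √|t - a|) :
    ∫ t in (0 : ℝ)..a, |reKernel a δ t| * ‖v t‖ ≤ 2 * c / √a := by
  refine (integral_abs_reKernel_mul_norm_le ha hδ le_rfl ha.le hv hc holder).trans_eq ?_
  rw [integral_abs_sub_rpow_neg_half_left ha.le]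
  nth_rw 1 [← Real.mul_self_sqrt ha.le]
  field_simp

theorem integral_abs_reKernel_mul_norm_le_right {F : Type*} [NormedAddCommGroup F] {v : ℝ → F}
    (ha : 0 < a) (hδ : 0 < δ) (hv : ContinuousOn v (Icc a (2 * a))) {c : ℝ} (hc : 0 ≤ c)
    (holder : ∀ t ∈ Icc a (2 * a), ‖v t‖ ≤ c * √|t - a|) :
    ∫ t in a..(2 * a), |reKernel a δ t| * ‖v t‖ ≤ 2 * c / √a := by
  refine (integral_abs_reKernel_mul_norm_le ha hδ ha.le (by linarith) hv hc holder).trans_eq ?_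
  rw [integral_abs_sub_rpow_neg_half_right ha.le]
  nth_rw 1 [← Real.mul_self_sqrt ha.le]
  field_simp

theorem abs_reKernel_add_le (ha : 0 < a) (hδ : 0 < δ) (hz : 0 ≤ z) (hza : z ≤ a) :
    |reKernel a δ (a - z) + reKernel a δ (a + z)| ≤ 1 / a ^ 2 := by
  rcases hz.eq_or_lt with rfl | h0
  · simpa [reKernel] using sq_nonneg a
  set s := z * (2 * a - z) with hs
  set t := z * (2 * a + z) with ht
  have s_pos : 0 < s := mul_pos h0 (by linarith)
  have t_pos : 0 < t := mul_pos h0 (by linarith)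
  have sum : reKernel a δ (a - z) + reKernel a δ (a + z)
      = 2 * z ^ 2 * (s * t - δ ^ 2) / ((s ^ 2 + δ ^ 2) * (t ^ 2 + δ ^ 2)) := by
    rw [show 2 * z ^ 2 = t - s by rw [hs, ht]; ring, reKernel, reKernel,
      show a ^ 2 - (a - z) ^ 2 = s by ring, show a ^ 2 - (a + z) ^ 2 = -t by ring, neg_sq]
    field_simp
    ring
  have num : |s * t - δ ^ 2| ≤ s * t + δ ^ 2 :=
    abs_le.2 ⟨by nlinarith [mul_pos s_pos t_pos], by nlinarith⟩
  have den : (s * t + δ ^ 2) * (s * t) ≤ (s ^ 2 + δ ^ 2) * (t ^ 2 + δ ^ 2) := by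
    nlinarith [mul_nonneg (sq_nonneg δ) (sq_nonneg (s - t)),
      mul_pos (mul_pos s_pos t_pos) (pow_pos hδ 2), pow_pos hδ 4]
  have st : 2 * a ^ 2 * z ^ 2 ≤ s * t := by
    have : z ^ 2 ≤ a ^ 2 := pow_le_pow_left₀ hz hza 2
    have st_eq : s * t = z ^ 2 * (4 * a ^ 2 - z ^ 2) := by rw [hs, ht]; ring
    nlinarith [mul_nonneg (sq_nonneg z) (sub_nonneg.2 this)]
  rw [sum, abs_div, abs_mul, abs_of_pos (show 0 < 2 * z ^ 2 by positivity),
    abs_of_pos (show 0 < (s ^ 2 + δ ^ 2) * (t ^ 2 + δ ^ 2) by positivity),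
    div_le_div_iff₀ (by positivity) (by positivity), one_mul]
  calc 2 * z ^ 2 * |s * t - δ ^ 2| * a ^ 2 ≤ 2 * z ^ 2 * (s * t + δ ^ 2) * a ^ 2 := by gcongr
    _ = (s * t + δ ^ 2) * (2 * a ^ 2 * z ^ 2) := by ring
    _ ≤ (s * t + δ ^ 2) * (s * t) := by gcongr
    _ ≤ (s ^ 2 + δ ^ 2) * (t ^ 2 + δ ^ 2) := den

theorem abs_integral_reKernel_le (ha : 0 < a) (hδ : 0 < δ) :
    |(∫ y in (0 : ℝ)..a, reKernel a δ y) + ∫ y in a..(2 * a), reKernel a δ y| ≤ 1 / a := by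
  have hq := continuous_reKernel (a := a) hδ
  have left : ∫ y in (0 : ℝ)..a, reKernel a δ y = ∫ z in (0 : ℝ)..a, reKernel a δ (a - z) := by
    simp [intervalIntegral.integral_comp_sub_left (reKernel a δ) a]
  have right : ∫ y in a..(2 * a), reKernel a δ y = ∫ z in (0 : ℝ)..a, reKernel a δ (a + z) := by
    simp [intervalIntegral.integral_comp_add_left (reKernel a δ) a, two_mul]
  have left_cont : Continuous fun z => reKernel a δ (a - z) := by fun_prop
  have right_cont : Continuous fun z => reKernel a δ (a + z) := by fun_prop
  rw [left, right, ← intervalIntegral.integral_add (left_cont.intervalIntegrable _ _)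
    (right_cont.intervalIntegrable _ _), ← Real.norm_eq_abs]
  refine (intervalIntegral.norm_integral_le_of_norm_le_const (C := 1 / a ^ 2)
    fun z hz => ?_).trans_eq ?_
  · rw [uIoc_of_le ha.le] at hz
    exact abs_reKernel_add_le ha hδ hz.1.le hz.2
  · rw [sub_zero, abs_of_pos ha]
    field_simp

theorem imKernel_le (ha : 0 < a) (hδ : 0 < δ) (hy : 0 ≤ y) :
    imKernel a δ y ≤ δ / ((a * (y - a)) ^ 2 + δ ^ 2) := by
  have : (a ^ 2 - y ^ 2) ^ 2 = ((a + y) * (y - a)) ^ 2 := by ring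
  rw [imKernel, this, mul_pow, mul_pow]
  gcongr
  linarith

theorem one_le_mul_imKernel (ha : 0 < a) (hδ : 0 < δ) (hδa : δ ≤ a ^ 2)
    (hy : y ∈ Icc (a - δ / a) a) : 1 ≤ 5 * δ * imKernel a δ y := by
  have had : a * (δ / a) = δ := mul_div_cancel₀ _ ha.ne'
  have hda : δ / a ≤ a := (div_le_iff₀ ha).2 (hδa.trans_eq (sq a))
  have hs0 : 0 ≤ a ^ 2 - y ^ 2 := by nlinarith [hy.1, hy.2]
  have hs : a ^ 2 - y ^ 2 ≤ 2 * δ := by nlinarith [hy.1, hy.2]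
  rw [imKernel, mul_div_assoc', le_div_iff₀ (by positivity)]
  nlinarith

theorem integral_imKernel_le (ha : 0 < a) (hδ : 0 < δ) {b : ℝ} (hb : 0 ≤ b) :
    ∫ y in (0 : ℝ)..b, imKernel a δ y ≤ 4 / a := by
  have arctan_deriv : ∀ y ∈ uIcc 0 b, HasDerivAt (fun y => 1 / a * Real.arctan (a * (y - a) / δ))
      (δ / ((a * (y - a)) ^ 2 + δ ^ 2)) y := by
    intro y _
    have inner : HasDerivAt (fun y => a * (y - a) / δ) (a / δ) y := by
      simpa using (((hasDerivAt_id y).sub_const a).const_mul a).div_const δ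
    refine (inner.arctan.const_mul (1 / a)).congr_deriv ?_
    field_simp
    ring
  have lorentz_cont : Continuous fun y => δ / ((a * (y - a)) ^ 2 + δ ^ 2) :=
    Continuous.div (by fun_prop) (by fun_prop) fun y => by positivity
  calc ∫ y in (0 : ℝ)..b, imKernel a δ y
      ≤ ∫ y in (0 : ℝ)..b, δ / ((a * (y - a)) ^ 2 + δ ^ 2) :=
        intervalIntegral.integral_mono_on hb ((continuous_imKernel hδ).intervalIntegrable _ _)
          (lorentz_cont.intervalIntegrable _ _) fun y hy => imKernel_le ha hδ hy.1
    _ = 1 / a * (Real.arctan (a * (b - a) / δ) - Real.arctan (a * (0 - a) / δ)) := by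
        rw [intervalIntegral.integral_eq_sub_of_hasDerivAt arctan_deriv
          (lorentz_cont.intervalIntegrable _ _)]
        ring
    _ ≤ 1 / a * 4 := by
        gcongr
        linarith [Real.arctan_lt_pi_div_two (a * (b - a) / δ),
          Real.neg_pi_div_two_lt_arctan (a * (0 - a) / δ), Real.pi_le_four]
    _ = 4 / a := by ring

end Kernel

section KernelForm

open Set

variable {E : Type*} [NormedAddCommGroup E] {g : ℝ → E} {a δ c : ℝ}

theorem reKernel_mul_norm_sq_le_of_le (hδ : 0 < δ) {y : ℝ} (hy : 0 ≤ y) (hya : y ≤ a) :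
    reKernel a δ y * ‖g y‖ ^ 2 ≤ ‖g y - g a‖ ^ 2 / (a ^ 2 + δ - y ^ 2)
      + 2 * (imKernel a δ y * ‖g y‖ ^ 2) + 2 * ‖g a‖ ^ 2 * imKernel a δ y
      + 2 * ‖g a‖ * (|reKernel a δ y| * ‖g y - g a‖) + ‖g a‖ ^ 2 * reKernel a δ y := by
  have hq : 0 ≤ reKernel a δ y := reKernel_nonneg hy hya
  have split : ‖g y‖ ≤ ‖g y - g a‖ + ‖g a‖ := norm_le_norm_sub_add _ _
  have diff : ‖g y - g a‖ ≤ ‖g y‖ + ‖g a‖ := norm_sub_le _ _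
  rw [abs_of_nonneg hq, ← one_div_mul_eq_div]
  set n := ‖g y - g a‖
  have expand : ‖g y‖ ^ 2 ≤ n ^ 2 + 2 * ‖g a‖ * n + ‖g a‖ ^ 2 :=
    (pow_le_pow_left₀ (norm_nonneg _) split 2).trans_eq (by ring)
  have diff_sq : n ^ 2 ≤ 2 * ‖g y‖ ^ 2 + 2 * ‖g a‖ ^ 2 :=
    (pow_le_pow_left₀ (norm_nonneg _) diff 2).trans (by linarith [sq_nonneg (‖g y‖ - ‖g a‖)])
  have kernel := mul_le_mul_of_nonneg_right (reKernel_le hδ hy hya) (sq_nonneg n)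
  have := mul_le_mul_of_nonneg_left expand hq
  have := mul_le_mul_of_nonneg_left diff_sq (imKernel_nonneg hδ y (a := a))
  linarith

theorem integral_reKernel_mul_norm_sq_le_left (ha : 0 < a) (hδ : 0 < δ) (hg : Continuous g)
    (hc : 0 ≤ c) (holder : ∀ t ∈ Icc 0 a, ‖g t - g a‖ ≤ c * √|t - a|) :
    ∫ y in (0 : ℝ)..a, reKernel a δ y * ‖g y‖ ^ 2
      ≤ (∫ y in (0 : ℝ)..a, ‖g y - g a‖ ^ 2 / (a ^ 2 + δ - y ^ 2))
        + 2 * (∫ y in (0 : ℝ)..a, imKernel a δ y * ‖g y‖ ^ 2) + 8 * (‖g a‖ ^ 2 / a)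
        + 4 * (‖g a‖ * c / √a) + ‖g a‖ ^ 2 * ∫ y in (0 : ℝ)..a, reKernel a δ y := by
  have hq := continuous_reKernel (a := a) hδ
  have hp := continuous_imKernel (a := a) hδ
  have weight_cont : ContinuousOn (fun y => ‖g y - g a‖ ^ 2 / (a ^ 2 + δ - y ^ 2)) (Icc 0 a) :=
    ContinuousOn.div (by fun_prop) (by fun_prop) fun y hy =>
      (sub_sq_pos_of_mem_Icc (by linarith) hy).ne'
  have pointwise := intervalIntegral.integral_mono_on (μ := volume) ha.le
    (Continuous.intervalIntegrable (by fun_prop) _ _)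
    (ContinuousOn.intervalIntegrable_of_Icc ha.le (by fun_prop)) fun y hy =>
      reKernel_mul_norm_sq_le_of_le (g := g) hδ hy.1 hy.2
  rw [intervalIntegral.integral_add, intervalIntegral.integral_add, intervalIntegral.integral_add,
    intervalIntegral.integral_add] at pointwise
  · simp only [intervalIntegral.integral_const_mul] at pointwise
    have im_bound : 2 * ‖g a‖ ^ 2 * (∫ y in (0 : ℝ)..a, imKernel a δ y) ≤ 8 * (‖g a‖ ^ 2 / a) :=
      (mul_le_mul_of_nonneg_left (integral_imKernel_le ha hδ ha.le) (by positivity)).trans_eq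
        (by ring)
    have holder_bound : 2 * ‖g a‖ * (∫ y in (0 : ℝ)..a, |reKernel a δ y| * ‖g y - g a‖)
        ≤ 4 * (‖g a‖ * c / √a) :=
      (mul_le_mul_of_nonneg_left (integral_abs_reKernel_mul_norm_le_left
        (v := fun y => g y - g a) ha hδ (by fun_prop) hc holder) (by positivity)).trans_eq (by ring)
    linarith
  all_goals exact ContinuousOn.intervalIntegrable_of_Icc ha.le (by fun_prop)

theorem integral_reKernel_mul_norm_sq_le_right (ha : 0 < a) (hδ : 0 < δ) (hg : Continuous g)
    (hc : 0 ≤ c) (holder : ∀ t ∈ Icc a (2 * a), ‖g t - g a‖ ≤ c * √|t - a|) :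
    ∫ y in a..(2 * a), reKernel a δ y * ‖g y‖ ^ 2
      ≤ 4 * (‖g a‖ * c / √a) + ‖g a‖ ^ 2 * ∫ y in a..(2 * a), reKernel a δ y := by
  have hq := continuous_reKernel (a := a) hδ
  have pointwise : ∀ y ∈ Icc a (2 * a), reKernel a δ y * ‖g y‖ ^ 2
      ≤ 2 * ‖g a‖ * (|reKernel a δ y| * ‖g y - g a‖) + ‖g a‖ ^ 2 * reKernel a δ y := by
    intro y hy
    have hq0 : reKernel a δ y ≤ 0 := reKernel_nonpos ha.le hy.1
    have reverse : ‖g a‖ ≤ ‖g y - g a‖ + ‖g y‖ := by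
      rw [norm_sub_rev]
      exact norm_le_norm_sub_add _ _
    have lower : ‖g a‖ ^ 2 - 2 * ‖g a‖ * ‖g y - g a‖ ≤ ‖g y‖ ^ 2 := by
      nlinarith [norm_nonneg (g a), norm_nonneg (g y), sq_nonneg (‖g a‖ - ‖g y‖)]
    rw [abs_of_nonpos hq0]
    linarith [mul_le_mul_of_nonpos_left lower hq0]
  have integrated := intervalIntegral.integral_mono_on (μ := volume) (by linarith)
    (Continuous.intervalIntegrable (by fun_prop) _ _)
    (Continuous.intervalIntegrable (by fun_prop) _ _) pointwise
  rw [intervalIntegral.integral_add, intervalIntegral.integral_const_mul,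
    intervalIntegral.integral_const_mul] at integrated
  · have holder_bound : 2 * ‖g a‖ * (∫ y in a..(2 * a), |reKernel a δ y| * ‖g y - g a‖)
        ≤ 4 * (‖g a‖ * c / √a) :=
      (mul_le_mul_of_nonneg_left (integral_abs_reKernel_mul_norm_le_right
        (v := fun y => g y - g a) ha hδ (by fun_prop) hc holder) (by positivity)).trans_eq (by ring)
    linarith
  all_goals exact Continuous.intervalIntegrable (by fun_prop) _ _

-- Beyond the critical point `a` the kernel is negative, so the range of integration may be cut or
-- extended to `[a, 2a]`, which is the reflection of `[0, a]`.
theorem integral_reKernel_mul_norm_sq_le_extend (ha : 0 < a) (ha1 : a ≤ 1) (hδ : 0 < δ)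
    (hg : Continuous g) (hg1 : g 1 = 0) :
    ∫ y in a..1, reKernel a δ y * ‖g y‖ ^ 2
      ≤ ∫ y in a..(2 * a), reKernel a δ y * ‖g (min y 1)‖ ^ 2 := by
  have hq := continuous_reKernel (a := a) hδ
  have split : ∀ u : ℝ → E, Continuous u → ∀ x y z : ℝ,
      (∫ t in x..y, reKernel a δ t * ‖u t‖ ^ 2) + (∫ t in y..z, reKernel a δ t * ‖u t‖ ^ 2)
        = ∫ t in x..z, reKernel a δ t * ‖u t‖ ^ 2 := fun u hu x y z =>
    intervalIntegral.integral_add_adjacent_intervals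
      (Continuous.intervalIntegrable (by fun_prop) _ _)
      (Continuous.intervalIntegrable (by fun_prop) _ _)
  have trunc : ∀ z ∈ Icc a 1, ∫ y in a..z, reKernel a δ y * ‖g (min y 1)‖ ^ 2
      = ∫ y in a..z, reKernel a δ y * ‖g y‖ ^ 2 := fun z hz =>
    intervalIntegral.integral_congr fun y hy => by
      rw [uIcc_of_le hz.1] at hy
      simp only [min_eq_left (hy.2.trans hz.2)]
  rcases le_total (2 * a) 1 with h | h
  · have tail : 0 ≤ ∫ y in (2 * a)..1, -(reKernel a δ y * ‖g y‖ ^ 2) :=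
      intervalIntegral.integral_nonneg h fun y hy => neg_nonneg.2
        (mul_nonpos_of_nonpos_of_nonneg (reKernel_nonpos ha.le (by linarith [hy.1]))
          (sq_nonneg _))
    rw [intervalIntegral.integral_neg] at tail
    rw [trunc (2 * a) ⟨by linarith, h⟩, ← split g hg a (2 * a) 1]
    linarith
  · have tail : ∫ y in 1..(2 * a), reKernel a δ y * ‖g (min y 1)‖ ^ 2 = 0 :=
      intervalIntegral.integral_zero_ae (Filter.Eventually.of_forall fun y hy => by
        rw [uIoc_of_le h] at hy
        simp [min_eq_right hy.1.le, hg1])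
    rw [← split (fun y => g (min y 1)) (by fun_prop) a 1 (2 * a), tail, add_zero,
      trunc 1 ⟨ha1, le_rfl⟩]

theorem integral_reKernel_mul_norm_sq_le_of_le_one [NormedSpace ℝ E] [CompleteSpace E]
    (ha : 0 < a) (ha1 : a ≤ 1) (hδ : 0 < δ) (hg : ContDiff ℝ 1 g) (hg1 : g 1 = 0) :
    ∫ y in (0 : ℝ)..1, reKernel a δ y * ‖g y‖ ^ 2
      ≤ (∫ y in (0 : ℝ)..a, ‖g y - g a‖ ^ 2 / (a ^ 2 + δ - y ^ 2))
        + 2 * (∫ y in (0 : ℝ)..a, imKernel a δ y * ‖g y‖ ^ 2) + 9 * (‖g a‖ ^ 2 / a)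
        + 8 * (‖g a‖ * √(∫ y in (0 : ℝ)..1, ‖deriv g y‖ ^ 2) / √a) := by
  have hq := continuous_reKernel (a := a) hδ
  have hgc := hg.continuous
  have holder : ∀ y ∈ Icc (0 : ℝ) 1,
      ‖g y - g a‖ ≤ √(∫ y in (0 : ℝ)..1, ‖deriv g y‖ ^ 2) * √|y - a| := fun y hy =>
    norm_sub_le_sqrt_integral_mul_sqrt_abs_sub hg ⟨ha.le, ha1⟩ hy
  have left := integral_reKernel_mul_norm_sq_le_left ha hδ hgc (Real.sqrt_nonneg _) fun y hy =>
    holder y ⟨hy.1, hy.2.trans ha1⟩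
  have right := integral_reKernel_mul_norm_sq_le_right (g := fun y => g (min y 1)) ha hδ
    (by fun_prop) (Real.sqrt_nonneg _) fun y hy => by
      have near : min y 1 - a ≤ y - a := sub_le_sub_right (min_le_left y 1) a
      have far : 0 ≤ min y 1 - a := sub_nonneg.2 (le_min hy.1 ha1)
      rw [min_eq_left ha1]
      refine (holder _ ⟨by linarith, min_le_right y 1⟩).trans ?_
      rw [abs_of_nonneg far, abs_of_nonneg (far.trans near)]
      gcongr
  have extend := integral_reKernel_mul_norm_sq_le_extend ha ha1 hδ hgc hg1
  have split : (∫ y in (0 : ℝ)..a, reKernel a δ y * ‖g y‖ ^ 2)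
      + (∫ y in a..1, reKernel a δ y * ‖g y‖ ^ 2)
        = ∫ y in (0 : ℝ)..1, reKernel a δ y * ‖g y‖ ^ 2 :=
    intervalIntegral.integral_add_adjacent_intervals
      (Continuous.intervalIntegrable (by fun_prop) _ _)
      (Continuous.intervalIntegrable (by fun_prop) _ _)
  have cancel := mul_le_mul_of_nonneg_left (le_of_abs_le (abs_integral_reKernel_le ha hδ))
    (sq_nonneg ‖g a‖)
  rw [min_eq_left ha1] at right
  rw [mul_add, mul_one_div] at cancel
  linarith

theorem integral_reKernel_mul_norm_sq_le_of_one_le (ha1 : 1 ≤ a) (hδ : 0 < δ)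
    (hg : Continuous g) :
    ∫ y in (0 : ℝ)..1, reKernel a δ y * ‖g y‖ ^ 2
      ≤ (∫ y in (0 : ℝ)..1, ‖g y‖ ^ 2 / (a ^ 2 + δ - y ^ 2))
        + ∫ y in (0 : ℝ)..1, imKernel a δ y * ‖g y‖ ^ 2 := by
  have hq := continuous_reKernel (a := a) hδ
  have hp := continuous_imKernel (a := a) hδ
  have weight_cont : ContinuousOn (fun y => ‖g y‖ ^ 2 / (a ^ 2 + δ - y ^ 2)) (Icc 0 1) :=
    ContinuousOn.div (by fun_prop) (by fun_prop) fun y hy =>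
      (sub_sq_pos_of_mem_Icc (by nlinarith) hy).ne'
  rw [← intervalIntegral.integral_add]
  · refine intervalIntegral.integral_mono_on zero_le_one
      (Continuous.intervalIntegrable (by fun_prop) _ _)
      (ContinuousOn.intervalIntegrable_of_Icc zero_le_one (by fun_prop)) fun y hy => ?_
    rw [← one_div_mul_eq_div, ← add_mul]
    exact mul_le_mul_of_nonneg_right (reKernel_le hδ hy.1 (hy.2.trans ha1)) (sq_nonneg _)
  all_goals exact ContinuousOn.intervalIntegrable_of_Icc zero_le_one (by fun_prop)

theorem integral_reKernel_mul_norm_sq_le_hardyDefect {E : Type*} [NormedAddCommGroup E]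
    [InnerProductSpace ℝ E] [CompleteSpace E] {g : ℝ → E} (ha : 0 < a) (hδ : 0 < δ)
    (hg : ContDiff ℝ 1 g) (hg1 : g 1 = 0) {b : ℝ} (hb : b = min a 1) :
    ∫ y in (0 : ℝ)..1, reKernel a δ y * ‖g y‖ ^ 2
      ≤ ((∫ y in (0 : ℝ)..b, ‖deriv g y‖ ^ 2)
          - ∫ y in (0 : ℝ)..b, ‖hardyDefect (a ^ 2 + δ) b g y‖ ^ 2) / 2
        + 2 * (∫ y in (0 : ℝ)..1, imKernel a δ y * ‖g y‖ ^ 2) + 9 * (‖g b‖ ^ 2 / a)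
        + 8 * (‖g b‖ * √(∫ y in (0 : ℝ)..1, ‖deriv g y‖ ^ 2) / √a) := by
  have hgc := hg.continuous
  have hp := continuous_imKernel (a := a) hδ
  have hp0 : ∀ y, 0 ≤ imKernel a δ y * ‖g y‖ ^ 2 := fun y =>
    mul_nonneg (imKernel_nonneg hδ y) (sq_nonneg _)
  rcases le_total a 1 with ha1 | ha1
  · rw [min_eq_left ha1] at hb
    subst hb
    have := integral_norm_hardyDefect_sq (c := b ^ 2 + δ) hg ha.le (by linarith)
    have := integral_reKernel_mul_norm_sq_le_of_le_one ha ha1 hδ hg hg1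
    have := integral_mono_interval_of_continuous (by fun_prop) hp0 le_rfl ha.le ha1
    linarith
  · rw [min_eq_right ha1] at hb
    subst hb
    have := integral_norm_hardyDefect_sq (c := a ^ 2 + δ) hg zero_le_one (by nlinarith)
    have := integral_reKernel_mul_norm_sq_le_of_one_le ha1 hδ hgc
    have := intervalIntegral.integral_nonneg (μ := volume) zero_le_one fun y _ => hp0 y
    simp only [hg1, sub_zero, norm_zero, zero_pow two_ne_zero, zero_div, zero_mul, mul_zero] at *
    linarith

theorem norm_sq_le_integral_imKernel [NormedSpace ℝ E] [CompleteSpace E] (ha : 0 < a)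
    (hδ : 0 < δ) (hδa : δ ≤ a ^ 2) (hg : ContDiff ℝ 1 g) :
    ‖g a‖ ^ 2 ≤ 10 * a * (∫ y in (0 : ℝ)..a, imKernel a δ y * ‖g y‖ ^ 2)
      + 2 * (δ / a) * ∫ y in (0 : ℝ)..a, ‖deriv g y‖ ^ 2 := by
  have hgc := hg.continuous
  have hg' : Continuous (deriv g) := hg.continuous_deriv le_rfl
  have hp := continuous_imKernel (a := a) hδ
  set K := ∫ y in (0 : ℝ)..a, ‖deriv g y‖ ^ 2
  set d := δ / a with hd
  have had : a * d = δ := mul_div_cancel₀ _ ha.ne'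
  have hd0 : 0 < d := div_pos hδ ha
  have hda : d ≤ a := (div_le_iff₀ ha).2 (hδa.trans_eq (sq a))
  have pointwise : ∀ y ∈ Icc (a - d) a,
      ‖g a‖ ^ 2 ≤ 10 * δ * (imKernel a δ y * ‖g y‖ ^ 2) + 2 * d * K := by
    intro y hy
    have near : ‖g a - g y‖ ^ 2 ≤ d * K :=
      (norm_sub_sq_le_mul_integral_norm_deriv_sq hg hy.2).trans
        (mul_le_mul (by linarith [hy.1]) (integral_mono_interval_of_continuous (by fun_prop)
          (fun t => sq_nonneg _) (by linarith [hy.1]) hy.2 le_rfl)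
          (intervalIntegral.integral_nonneg hy.2 fun t _ => sq_nonneg _) hd0.le)
    have triangle : ‖g a‖ ^ 2 ≤ 2 * ‖g a - g y‖ ^ 2 + 2 * ‖g y‖ ^ 2 :=
      (pow_le_pow_left₀ (norm_nonneg _) (norm_le_norm_sub_add _ (g y)) 2).trans
        (by linarith [sq_nonneg (‖g a - g y‖ - ‖g y‖)])
    linarith [mul_le_mul_of_nonneg_right (one_le_mul_imKernel ha hδ hδa hy) (sq_nonneg ‖g y‖)]
  have average := intervalIntegral.integral_mono_on (μ := volume) (by linarith)
    intervalIntegrable_const (Continuous.intervalIntegrable (by fun_prop) _ _) pointwise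
  rw [intervalIntegral.integral_add (Continuous.intervalIntegrable (by fun_prop) _ _)
    intervalIntegrable_const] at average
  simp only [intervalIntegral.integral_const, intervalIntegral.integral_const_mul, smul_eq_mul,
    sub_sub_cancel] at average
  have subinterval := integral_mono_interval_of_continuous
    (u := fun y => imKernel a δ y * ‖g y‖ ^ 2) (by fun_prop)
    (fun y => mul_nonneg (imKernel_nonneg hδ y) (sq_nonneg _)) (sub_nonneg.2 hda)
    (sub_le_self a hd0.le) le_rfl
  refine le_of_mul_le_mul_left (average.trans ?_) hd0
  linear_combination 10 * δ * subinterval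
    - 10 * (∫ y in (0 : ℝ)..a, imKernel a δ y * ‖g y‖ ^ 2) * had

end KernelForm

section GroundState

open Set

variable {E : Type*} [NormedAddCommGroup E] [InnerProductSpace ℝ E] {g : ℝ → E}

/-- The amplitude of `g - g b` relative to the ground state `c - y²` of the Hardy inequality. -/
def hardyQuotient (c b : ℝ) (g : ℝ → E) (y : ℝ) : E := (c - y ^ 2)⁻¹ • (g y - g b)

theorem hasDerivAt_hardyQuotient {b c y : ℝ} (hg : DifferentiableAt ℝ g y) (hy : c - y ^ 2 ≠ 0) :
    HasDerivAt (hardyQuotient c b g) ((c - y ^ 2)⁻¹ • hardyDefect c b g y) y := by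
  have hs : HasDerivAt (fun y : ℝ => c - y ^ 2) (-(2 * y)) y := by
    simpa using (hasDerivAt_pow 2 y).const_sub c
  refine ((hs.inv hy).smul (hg.hasDerivAt.sub_const (g b))).congr_deriv ?_
  rw [hardyDefect, smul_add, smul_smul, Pi.inv_apply]
  congr 2
  field_simp

theorem continuousOn_hardyQuotient {b c : ℝ} (hg : Continuous g) (hbc : b ^ 2 < c) :
    ContinuousOn (hardyQuotient c b g) (Icc 0 b) :=
  ((by fun_prop : ContinuousOn (fun y : ℝ => c - y ^ 2) (Icc 0 b)).inv₀
    fun _ hy => (sub_sq_pos_of_mem_Icc hbc hy).ne').smul (by fun_prop)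

variable {a δ : ℝ}

theorem integral_inv_sub_sq_sq_le (ha : 0 < a) (hδ : 0 < δ) {y : ℝ} (hy : y ∈ Ioo 0 a) :
    ∫ t in (0 : ℝ)..y, ((a ^ 2 + δ - t ^ 2)⁻¹) ^ 2 ≤ (a ^ 2 * (a - y))⁻¹ := by
  have hsub : ∀ t ∈ Icc 0 y, 0 < a - t := fun t ht => by linarith [ht.2, hy.2]
  have hlow : ∀ t ∈ Icc 0 y, a * (a - t) ≤ a ^ 2 + δ - t ^ 2 := fun t ht => by
    nlinarith [ht.1, hsub t ht]
  have hlow0 : ∀ t ∈ Icc 0 y, 0 < a * (a - t) := fun t ht => mul_pos ha (hsub t ht)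
  have hci : ContinuousOn (fun t : ℝ => ((a - t) ^ 2)⁻¹) (Icc 0 y) :=
    (by fun_prop : ContinuousOn (fun t : ℝ => (a - t) ^ 2) (Icc 0 y)).inv₀
      fun t ht => (pow_pos (hsub t ht) 2).ne'
  calc ∫ t in (0 : ℝ)..y, ((a ^ 2 + δ - t ^ 2)⁻¹) ^ 2
      ≤ ∫ t in (0 : ℝ)..y, (a ^ 2)⁻¹ * ((a - t) ^ 2)⁻¹ := by
        refine intervalIntegral.integral_mono_on hy.1.le
          (ContinuousOn.intervalIntegrable_of_Icc hy.1.le ?_)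
          (ContinuousOn.intervalIntegrable_of_Icc hy.1.le (hci.const_smul (a ^ 2)⁻¹)) ?_
        · exact ((by fun_prop : ContinuousOn (fun t : ℝ => a ^ 2 + δ - t ^ 2) (Icc 0 y)).inv₀
            fun t ht => ((hlow0 t ht).trans_le (hlow t ht)).ne').pow 2
        · intro t ht
          rw [← mul_inv, ← mul_pow, ← inv_pow]
          exact pow_le_pow_left₀ (inv_nonneg.2 ((hlow0 t ht).le.trans (hlow t ht)))
            (inv_anti₀ (hlow0 t ht) (hlow t ht)) 2
    _ = (a ^ 2)⁻¹ * ((a - y)⁻¹ - (a - 0)⁻¹) := by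
        rw [intervalIntegral.integral_const_mul]
        congr 1
        refine intervalIntegral.integral_eq_sub_of_hasDerivAt (f := fun t => (a - t)⁻¹) ?_
          (ContinuousOn.intervalIntegrable_of_Icc hy.1.le hci)
        intro t ht
        rw [uIcc_of_le hy.1.le] at ht
        exact (((hasDerivAt_id t).const_sub a).inv (hsub t ht).ne').congr_deriv (by simp)
    _ ≤ (a ^ 2)⁻¹ * (a - y)⁻¹ := by
        have : 0 ≤ (a - 0)⁻¹ := by simpa using ha.le
        gcongr
        linarith
    _ = (a ^ 2 * (a - y))⁻¹ := (mul_inv _ _).symm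

theorem norm_hardyQuotient_sub_le [CompleteSpace E] (hg : ContDiff ℝ 1 g) (ha : 0 < a)
    (hδ : 0 < δ) {y : ℝ} (hy : y ∈ Ioo 0 a) :
    ‖hardyQuotient (a ^ 2 + δ) a g y - hardyQuotient (a ^ 2 + δ) a g 0‖
      ≤ √(∫ t in (0 : ℝ)..a, ‖hardyDefect (a ^ 2 + δ) a g t‖ ^ 2)
        * (1 / a * |y - a| ^ (-(1 : ℝ) / 2)) := by
  have hya : 0 < a - y := sub_pos.2 hy.2
  have hbc : a ^ 2 < a ^ 2 + δ := by linarith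
  have hsub : Icc 0 y ⊆ Icc 0 a := Icc_subset_Icc le_rfl hy.2.le
  have hs : ∀ t ∈ Icc 0 a, 0 < a ^ 2 + δ - t ^ 2 := fun t ht => sub_sq_pos_of_mem_Icc hbc ht
  have hdc := continuousOn_hardyDefect hg hbc
  have hsc : ContinuousOn (fun t : ℝ => (a ^ 2 + δ - t ^ 2)⁻¹) (Icc 0 a) :=
    (by fun_prop : ContinuousOn (fun t : ℝ => a ^ 2 + δ - t ^ 2) (Icc 0 a)).inv₀
      fun t ht => (hs t ht).ne'
  have hftc := intervalIntegral.integral_eq_sub_of_hasDerivAt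
    (f := hardyQuotient (a ^ 2 + δ) a g) (a := 0) (b := y)
    (fun t ht => hasDerivAt_hardyQuotient (b := a) (hg.differentiable one_ne_zero t)
      (hs t (hsub (uIcc_of_le hy.1.le ▸ ht))).ne')
    (ContinuousOn.intervalIntegrable_of_Icc hy.1.le ((hsc.smul hdc).mono hsub))
  have hnorm : ‖hardyQuotient (a ^ 2 + δ) a g y - hardyQuotient (a ^ 2 + δ) a g 0‖
      ≤ ∫ t in (0 : ℝ)..y, (a ^ 2 + δ - t ^ 2)⁻¹ * ‖hardyDefect (a ^ 2 + δ) a g t‖ := by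
    rw [← hftc]
    refine (intervalIntegral.norm_integral_le_integral_norm hy.1.le).trans_eq
      (intervalIntegral.integral_congr fun t ht => ?_)
    rw [uIcc_of_le hy.1.le] at ht
    simp only [norm_smul, norm_inv, Real.norm_of_nonneg (hs t (hsub ht)).le]
  have hD : ∫ t in (0 : ℝ)..y, ‖hardyDefect (a ^ 2 + δ) a g t‖ ^ 2
      ≤ ∫ t in (0 : ℝ)..a, ‖hardyDefect (a ^ 2 + δ) a g t‖ ^ 2 :=
    intervalIntegral.integral_mono_interval le_rfl hy.1.le hy.2.le
      (.of_forall fun t => sq_nonneg _)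
      (ContinuousOn.intervalIntegrable_of_Icc ha.le (hdc.norm.pow 2))
  have hrpow : 1 / a * |y - a| ^ (-(1 : ℝ) / 2) = √((a ^ 2 * (a - y))⁻¹) := by
    rw [abs_sub_comm, abs_of_pos hya, neg_div, Real.rpow_neg hya.le, ← Real.sqrt_eq_rpow,
      Real.sqrt_inv, Real.sqrt_mul (sq_nonneg a), Real.sqrt_sq ha.le, mul_inv, one_div]
  rw [mul_comm, hrpow, ← Real.sqrt_mul (by positivity)]
  refine Real.le_sqrt_of_sq_le ((pow_le_pow_left₀ (norm_nonneg _) hnorm 2).trans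
    ((sq_integral_mul_le hy.1.le (hsc.mono hsub) (hdc.norm.mono hsub)).trans ?_))
  exact mul_le_mul (integral_inv_sub_sq_sq_le ha hδ hy) hD
    (intervalIntegral.integral_nonneg hy.1.le fun t _ => sq_nonneg _) (by positivity)

theorem reKernel_mul_le {y : ℝ} (hδ : 0 < δ) :
    reKernel a δ y * (a ^ 2 + δ - y ^ 2) ≤ 3 / 2 := by
  rw [reKernel, div_mul_eq_mul_div, div_le_iff₀ (by positivity)]
  nlinarith [sq_nonneg (a ^ 2 - y ^ 2 - δ)]

theorem div_four_le_integral_reKernel_mul (ha : 0 < a) (hδ : 0 < δ) (hδa : δ ≤ a ^ 2) :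
    a / 4 ≤ ∫ y in (0 : ℝ)..a, reKernel a δ y * (a ^ 2 + δ - y ^ 2) := by
  have hw : Continuous fun y => reKernel a δ y * (a ^ 2 + δ - y ^ 2) :=
    (continuous_reKernel hδ).mul (by fun_prop)
  have hleft : ∫ _ in (0 : ℝ)..(a / 2), (1 / 2 : ℝ)
      ≤ ∫ y in (0 : ℝ)..(a / 2), reKernel a δ y * (a ^ 2 + δ - y ^ 2) := by
    refine intervalIntegral.integral_mono_on (by linarith) (by simp)
      (hw.intervalIntegrable _ _) fun y hy => ?_
    have hgap : δ / 2 ≤ a ^ 2 - y ^ 2 := by nlinarith [hy.1, hy.2]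
    rw [reKernel, div_mul_eq_mul_div, le_div_iff₀ (by positivity)]
    nlinarith
  have hright : 0 ≤ ∫ y in (a / 2)..a, reKernel a δ y * (a ^ 2 + δ - y ^ 2) :=
    intervalIntegral.integral_nonneg (by linarith) fun y hy =>
      mul_nonneg (reKernel_nonneg (by linarith [hy.1]) hy.2) (by nlinarith [hy.1, hy.2])
  rw [intervalIntegral.integral_const, smul_eq_mul] at hleft
  rw [← intervalIntegral.integral_add_adjacent_intervals (b := a / 2)
    (hw.intervalIntegrable _ _) (hw.intervalIntegrable _ _)]
  linarith

theorem norm_integral_smul_hardyQuotient_sub_le [CompleteSpace E] (hg : ContDiff ℝ 1 g)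
    (ha : 0 < a) (hδ : 0 < δ) :
    ‖∫ y in (0 : ℝ)..a, (reKernel a δ y * (a ^ 2 + δ - y ^ 2)) •
        (hardyQuotient (a ^ 2 + δ) a g y - hardyQuotient (a ^ 2 + δ) a g 0)‖
      ≤ 3 * √(∫ t in (0 : ℝ)..a, ‖hardyDefect (a ^ 2 + δ) a g t‖ ^ 2) / √a := by
  set D := ∫ t in (0 : ℝ)..a, ‖hardyDefect (a ^ 2 + δ) a g t‖ ^ 2
  have hint : IntervalIntegrable (fun y => |y - a| ^ (-(1 : ℝ) / 2)) volume 0 a :=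
    intervalIntegrable_abs_sub_rpow (by norm_num) a 0 a
  have hbc : a ^ 2 < a ^ 2 + δ := by linarith
  have hcont : ContinuousOn (fun y => (reKernel a δ y * (a ^ 2 + δ - y ^ 2)) •
      (hardyQuotient (a ^ 2 + δ) a g y - hardyQuotient (a ^ 2 + δ) a g 0)) (Icc 0 a) :=
    ((continuous_reKernel hδ).mul (by fun_prop)).continuousOn.smul
      ((continuousOn_hardyQuotient hg.continuous hbc).sub continuousOn_const)
  calc _ ≤ ∫ y in (0 : ℝ)..a, 3 / 2 * (√D * (1 / a)) * |y - a| ^ (-(1 : ℝ) / 2) := by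
        refine (intervalIntegral.norm_integral_le_integral_norm ha.le).trans
          (intervalIntegral.integral_mono_on_of_le_Ioo ha.le
            (ContinuousOn.intervalIntegrable_of_Icc ha.le hcont.norm) (hint.const_mul _)
            fun y hy => ?_)
        have hw : 0 ≤ reKernel a δ y * (a ^ 2 + δ - y ^ 2) :=
          mul_nonneg (reKernel_nonneg hy.1.le hy.2.le)
            (sub_sq_pos_of_mem_Icc hbc (Ioo_subset_Icc_self hy)).le
        rw [norm_smul, Real.norm_of_nonneg hw, mul_assoc (3 / 2 : ℝ), mul_assoc √D]
        exact mul_le_mul (reKernel_mul_le hδ) (norm_hardyQuotient_sub_le hg ha hδ hy)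
          (norm_nonneg _) (by norm_num)
    _ = 3 * √D * (√a / a) := by
        rw [intervalIntegral.integral_const_mul, integral_abs_sub_rpow_neg_half_left ha.le]
        ring
    _ = 3 * √D / √a := by rw [Real.sqrt_div_self]; ring

/-- Averaging `g - g a` against `reKernel` recovers its ground state amplitude. -/
theorem norm_sub_le_integral_reKernel_smul [CompleteSpace E] (hg : ContDiff ℝ 1 g) (ha : 0 < a)
    (hδ : 0 < δ) (hδa : δ ≤ a ^ 2) :
    ‖g 0 - g a‖ ≤ 8 * a * ‖∫ y in (0 : ℝ)..a, reKernel a δ y • (g y - g a)‖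
      + 24 * √a * √(∫ y in (0 : ℝ)..a, ‖hardyDefect (a ^ 2 + δ) a g y‖ ^ 2) := by
  set h := hardyQuotient (a ^ 2 + δ) a g with hh
  set w : ℝ → ℝ := fun y => reKernel a δ y * (a ^ 2 + δ - y ^ 2) with hw
  set D := ∫ y in (0 : ℝ)..a, ‖hardyDefect (a ^ 2 + δ) a g y‖ ^ 2
  have hbc : a ^ 2 < a ^ 2 + δ := by linarith
  have hwc : Continuous w := (continuous_reKernel hδ).mul (by fun_prop)
  have hsplit : ∫ y in (0 : ℝ)..a, reKernel a δ y • (g y - g a)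
      = (∫ y in (0 : ℝ)..a, w y) • h 0 + ∫ y in (0 : ℝ)..a, w y • (h y - h 0) := by
    have hrem : ContinuousOn (fun y => w y • (h y - h 0)) (Icc 0 a) :=
      hwc.continuousOn.smul ((continuousOn_hardyQuotient hg.continuous hbc).sub continuousOn_const)
    rw [← intervalIntegral.integral_smul_const, ← intervalIntegral.integral_add
      (Continuous.intervalIntegrable (by fun_prop) _ _)
      (ContinuousOn.intervalIntegrable_of_Icc ha.le hrem)]
    refine intervalIntegral.integral_congr fun y hy => ?_
    rw [uIcc_of_le ha.le] at hy
    have hne := (sub_sq_pos_of_mem_Icc hbc hy).ne'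
    have hwh : w y • h y = reKernel a δ y • (g y - g a) := by
      simp only [hw, hh, hardyQuotient, smul_smul, mul_inv_cancel_right₀ hne]
    simp only [← smul_add, add_sub_cancel, hwh]
  have hmass := div_four_le_integral_reKernel_mul ha hδ hδa
  have hamp : a / 4 * ‖h 0‖
      ≤ ‖∫ y in (0 : ℝ)..a, reKernel a δ y • (g y - g a)‖ + 3 * √D / √a := by
    calc a / 4 * ‖h 0‖ ≤ ‖(∫ y in (0 : ℝ)..a, w y) • h 0‖ := by
          rw [norm_smul, Real.norm_of_nonneg (le_trans (by positivity) hmass)]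
          gcongr
      _ = _ := by rw [eq_sub_of_add_eq hsplit.symm]
      _ ≤ _ := norm_sub_le _ _
      _ ≤ _ := by gcongr; exact norm_integral_smul_hardyQuotient_sub_le hg ha hδ
  have hg0 : g 0 - g a = (a ^ 2 + δ) • h 0 := by
    simp [hh, hardyQuotient, smul_smul, (by positivity : a ^ 2 + δ ≠ 0)]
  rw [hg0, norm_smul, Real.norm_of_nonneg (by positivity)]
  calc (a ^ 2 + δ) * ‖h 0‖ ≤ (2 * a ^ 2) * ‖h 0‖ := by gcongr; linarith
    _ = 8 * a * (a / 4 * ‖h 0‖) := by ring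
    _ ≤ 8 * a * (‖∫ y in (0 : ℝ)..a, reKernel a δ y • (g y - g a)‖ + 3 * √D / √a) := by gcongr
    _ = 8 * a * ‖∫ y in (0 : ℝ)..a, reKernel a δ y • (g y - g a)‖
        + 24 * (a / √a) * √D := by ring
    _ = _ := by rw [Real.div_sqrt]

end GroundState

section Ramp

open Set

/-- The continuous cutoff equal to `1` up to `a` and decreasing linearly to `0` at `2 * a`. -/
def ramp (a y : ℝ) : ℝ := min 1 (2 - y / a)

theorem continuous_ramp (a : ℝ) : Continuous (ramp a) := by
  unfold ramp; fun_prop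

variable {a δ y : ℝ}

theorem ramp_of_le (ha : 0 < a) (hy : y ≤ a) : ramp a y = 1 :=
  min_eq_left (by linarith [(div_le_one ha).2 hy])

theorem ramp_of_ge (ha : 0 < a) (hy : a ≤ y) : ramp a y = 2 - y / a :=
  min_eq_right (by linarith [(one_le_div ha).2 hy])

theorem ramp_le_one (a y : ℝ) : ramp a y ≤ 1 := min_le_left _ _

theorem ramp_nonneg (ha : 0 < a) (hy : y ≤ 2 * a) : 0 ≤ ramp a y :=
  le_min zero_le_one (by linarith [(div_le_iff₀ ha).2 hy])

variable {E : Type*} [NormedAddCommGroup E] [NormedSpace ℝ E]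

theorem norm_ramp_smul_le (ha : 0 < a) (hy : y ≤ 2 * a) (v : E) : ‖ramp a y • v‖ ≤ ‖v‖ := by
  rw [norm_smul, Real.norm_of_nonneg (ramp_nonneg ha hy)]
  exact mul_le_of_le_one_left (norm_nonneg v) (ramp_le_one a y)

theorem norm_integral_ramp_smul_le (ha : 0 < a) {u : ℝ → E} (hu : Continuous u) {x : ℝ}
    (hx : x ≤ 2 * a) : ‖∫ y in x..(2 * a), ramp a y • u y‖ ≤ ∫ y in x..(2 * a), ‖u y‖ := by
  have hr := continuous_ramp a
  exact (intervalIntegral.norm_integral_le_integral_norm hx).trans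
    (intervalIntegral.integral_mono_on hx (Continuous.intervalIntegrable (by fun_prop) _ _)
      (hu.norm.intervalIntegrable _ _) fun y hy => norm_ramp_smul_le ha hy.2 (u y))

theorem norm_integral_ramp_smul_sq_le (ha : 0 < a) {u : ℝ → E} (hu : Continuous u) :
    ‖∫ y in (0 : ℝ)..(2 * a), ramp a y • u y‖ ^ 2
      ≤ 2 * a * ∫ y in (0 : ℝ)..(2 * a), ‖u y‖ ^ 2 := by
  have h2a : 0 ≤ 2 * a := by positivity
  have hcs := sq_integral_mul_le h2a (p := fun _ => 1) (r := fun y => ‖u y‖) (by fun_prop)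
    (by fun_prop)
  simp only [one_mul, one_pow, intervalIntegral.integral_const, sub_zero, smul_eq_mul,
    mul_one] at hcs
  exact (pow_le_pow_left₀ (norm_nonneg _) (norm_integral_ramp_smul_le ha hu h2a) 2).trans hcs

theorem sqrt_mul_norm_smul_integral_ramp_smul_le {u : ℝ → E} (ha : 0 < a) (hu : Continuous u)
    {k : ℝ} :
    √a * ‖k ^ 2 • ∫ y in (0 : ℝ)..(2 * a), ramp a y • u y‖
      ≤ √2 * (|k| * a) * √(k ^ 2 * ∫ y in (0 : ℝ)..(2 * a), ‖u y‖ ^ 2) := by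
  have hN : 0 ≤ ∫ y in (0 : ℝ)..(2 * a), ‖u y‖ ^ 2 :=
    intervalIntegral.integral_nonneg (by positivity) fun _ _ => sq_nonneg _
  rw [norm_smul, Real.norm_of_nonneg (sq_nonneg k)]
  refine (sq_le_sq₀ (by positivity) (by positivity)).1 ?_
  calc (√a * (k ^ 2 * ‖∫ y in (0 : ℝ)..(2 * a), ramp a y • u y‖)) ^ 2
      = a * k ^ 4 * ‖∫ y in (0 : ℝ)..(2 * a), ramp a y • u y‖ ^ 2 := by
        rw [mul_pow, Real.sq_sqrt ha.le]; ring
    _ ≤ a * k ^ 4 * (2 * a * ∫ y in (0 : ℝ)..(2 * a), ‖u y‖ ^ 2) := by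
        gcongr; exact norm_integral_ramp_smul_sq_le ha hu
    _ = _ := by
        rw [mul_pow, mul_pow, mul_pow, Real.sq_sqrt (mul_nonneg (sq_nonneg k) hN),
          Real.sq_sqrt zero_le_two, sq_abs]
        ring

theorem integral_ramp_smul_deriv_deriv [CompleteSpace E] {Φ : ℝ → E} (hΦ : ContDiff ℝ 2 Φ)
    (ha : 0 < a) (h0 : deriv Φ 0 = 0) :
    ∫ y in (0 : ℝ)..(2 * a), ramp a y • deriv (deriv Φ) y = a⁻¹ • (Φ (2 * a) - Φ a) := by
  have hΦ' : ContDiff ℝ 1 (deriv Φ) := hΦ.deriv'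
  have hΦ'' : Continuous (deriv (deriv Φ)) := hΦ'.continuous_deriv le_rfl
  have hr := continuous_ramp a
  have hd : ∀ y, HasDerivAt Φ (deriv Φ y) y := fun y =>
    (hΦ.differentiable two_ne_zero y).hasDerivAt
  have hd' : ∀ y, HasDerivAt (deriv Φ) (deriv (deriv Φ) y) y := fun y =>
    (hΦ'.differentiable one_ne_zero y).hasDerivAt
  have hleft : ∫ y in (0 : ℝ)..a, ramp a y • deriv (deriv Φ) y = deriv Φ a := by
    rw [← sub_zero (deriv Φ a), ← h0, ← intervalIntegral.integral_eq_sub_of_hasDerivAt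
      (fun y _ => hd' y) (hΦ''.intervalIntegrable _ _)]
    refine intervalIntegral.integral_congr fun y hy => ?_
    rw [uIcc_of_le ha.le] at hy
    simp only [ramp_of_le ha hy.2, one_smul]
  have hright : ∫ y in a..(2 * a), ramp a y • deriv (deriv Φ) y
      = ((2 - 2 * a / a) • deriv Φ (2 * a) + a⁻¹ • Φ (2 * a))
        - ((2 - a / a) • deriv Φ a + a⁻¹ • Φ a) := by
    rw [← intervalIntegral.integral_eq_sub_of_hasDerivAt
      (f := fun y => (2 - y / a) • deriv Φ y + a⁻¹ • Φ y)
      (f' := fun y => (2 - y / a) • deriv (deriv Φ) y)]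
    · refine intervalIntegral.integral_congr fun y hy => ?_
      rw [uIcc_of_le (by linarith)] at hy
      simp only [ramp_of_ge ha hy.1]
    · intro y _
      have hlin : HasDerivAt (fun y : ℝ => 2 - y / a) (-a⁻¹) y :=
        (((hasDerivAt_id y).div_const a).const_sub 2).congr_deriv (by simp)
      refine ((hlin.smul (hd' y)).add ((hd y).const_smul a⁻¹)).congr_deriv ?_
      rw [neg_smul, neg_add_cancel_right]
    · exact Continuous.intervalIntegrable (by fun_prop) _ _
  rw [← intervalIntegral.integral_add_adjacent_intervals (b := a)
    (Continuous.intervalIntegrable (by fun_prop) _ _)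
    (Continuous.intervalIntegrable (by fun_prop) _ _), hleft, hright, div_self ha.ne',
    mul_div_cancel_right₀ _ ha.ne']
  module

theorem norm_integral_ramp_smul_sub_le [CompleteSpace E] {Φ : ℝ → E} (hΦ : ContDiff ℝ 2 Φ)
    {k : ℝ} (ha : 0 < a) (h0 : deriv Φ 0 = 0) :
    √a * ‖∫ y in (0 : ℝ)..(2 * a), ramp a y • (deriv (deriv Φ) y - k ^ 2 • Φ y)‖
      ≤ √(∫ y in a..(2 * a), ‖deriv Φ y‖ ^ 2)
        + √2 * (|k| * a) * √(k ^ 2 * ∫ y in (0 : ℝ)..(2 * a), ‖Φ y‖ ^ 2) := by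
  have hΦc := hΦ.continuous
  have hΦ'' : Continuous (deriv (deriv Φ)) := hΦ.deriv'.continuous_deriv le_rfl
  have hr := continuous_ramp a
  have hsplit : ∫ y in (0 : ℝ)..(2 * a), ramp a y • (deriv (deriv Φ) y - k ^ 2 • Φ y)
      = a⁻¹ • (Φ (2 * a) - Φ a) - k ^ 2 • ∫ y in (0 : ℝ)..(2 * a), ramp a y • Φ y := by
    rw [← integral_ramp_smul_deriv_deriv hΦ ha h0, ← intervalIntegral.integral_smul,
      ← intervalIntegral.integral_sub (Continuous.intervalIntegrable (by fun_prop) _ _)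
        (Continuous.intervalIntegrable (by fun_prop) _ _)]
    simp only [smul_sub, smul_comm (k ^ 2)]
  have hdiff : √a * ‖a⁻¹ • (Φ (2 * a) - Φ a)‖ ≤ √(∫ y in a..(2 * a), ‖deriv Φ y‖ ^ 2) := by
    have hholder := norm_sub_le_sqrt_integral_mul_sqrt_abs_sub (hΦ.of_le one_le_two) (l := a)
      (r := 2 * a) (x := a) (y := 2 * a) ⟨le_rfl, by linarith⟩ ⟨by linarith, le_rfl⟩
    rw [show 2 * a - a = a by ring, abs_of_pos ha] at hholder
    rw [norm_smul, norm_inv, Real.norm_of_nonneg ha.le]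
    calc √a * (a⁻¹ * ‖Φ (2 * a) - Φ a‖)
        ≤ √a * (a⁻¹ * (√(∫ y in a..(2 * a), ‖deriv Φ y‖ ^ 2) * √a)) := by gcongr
      _ = (√a * √a) * a⁻¹ * √(∫ y in a..(2 * a), ‖deriv Φ y‖ ^ 2) := by ring
      _ = _ := by rw [Real.mul_self_sqrt ha.le, mul_inv_cancel₀ ha.ne', one_mul]
  have hmean := sqrt_mul_norm_smul_integral_ramp_smul_le (k := k) ha hΦc
  calc _ ≤ √a * (‖a⁻¹ • (Φ (2 * a) - Φ a)‖
          + ‖k ^ 2 • ∫ y in (0 : ℝ)..(2 * a), ramp a y • Φ y‖) := by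
        rw [hsplit]; gcongr; exact norm_sub_le _ _
    _ ≤ _ := by rw [mul_add]; exact add_le_add hdiff hmean

theorem norm_integral_ramp_smul_imKernel_smul_le {g : ℝ → E} (ha : 0 < a) (hδ : 0 < δ)
    (hg : Continuous g) :
    √a * ‖∫ y in (0 : ℝ)..(2 * a), ramp a y • imKernel a δ y • g y‖
      ≤ 2 * √(∫ y in (0 : ℝ)..(2 * a), imKernel a δ y * ‖g y‖ ^ 2) := by
  have h2a : 0 ≤ 2 * a := by positivity
  have hd := continuous_imKernel (a := a) hδ
  have hd0 := imKernel_nonneg (a := a) hδ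
  set X := ∫ y in (0 : ℝ)..(2 * a), imKernel a δ y * ‖g y‖ ^ 2
  have hX : 0 ≤ X := intervalIntegral.integral_nonneg h2a
    fun y _ => mul_nonneg (hd0 y) (sq_nonneg _)
  have hnorm : ‖∫ y in (0 : ℝ)..(2 * a), ramp a y • imKernel a δ y • g y‖
      ≤ ∫ y in (0 : ℝ)..(2 * a), √(imKernel a δ y) * (√(imKernel a δ y) * ‖g y‖) := by
    refine (norm_integral_ramp_smul_le ha (hd.smul hg) h2a).trans_eq ?_
    simp only [Pi.smul_apply', norm_smul, Real.norm_of_nonneg (hd0 _), ← mul_assoc,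
      Real.mul_self_sqrt (hd0 _)]
  have hcs := sq_integral_mul_le h2a (p := fun y => √(imKernel a δ y))
    (r := fun y => √(imKernel a δ y) * ‖g y‖) (by fun_prop) (by fun_prop)
  simp only [mul_pow, Real.sq_sqrt (hd0 _)] at hcs
  refine (sq_le_sq₀ (by positivity) (by positivity)).1 ?_
  rw [mul_pow, mul_pow, Real.sq_sqrt ha.le, Real.sq_sqrt hX]
  calc _ ≤ a * ((∫ y in (0 : ℝ)..(2 * a), imKernel a δ y) * X) := by
        gcongr
        exact (pow_le_pow_left₀ (norm_nonneg _) hnorm 2).trans hcs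
    _ ≤ a * (4 / a * X) := by gcongr; exact integral_imKernel_le ha hδ h2a
    _ = 2 ^ 2 * X := by field_simp; ring

theorem norm_integral_ramp_smul_reKernel_smul_sub_le [CompleteSpace E] {g : ℝ → E} (ha : 0 < a)
    (hδ : 0 < δ) (hg : ContDiff ℝ 1 g) :
    ‖∫ y in a..(2 * a), ramp a y • reKernel a δ y • (g y - g a)‖
      ≤ 2 * √(∫ y in a..(2 * a), ‖deriv g y‖ ^ 2) / √a := by
  have hgc := hg.continuous
  have hq := continuous_reKernel (a := a) hδ
  refine (norm_integral_ramp_smul_le ha (by fun_prop) (by linarith)).trans ?_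
  simp only [norm_smul, Real.norm_eq_abs]
  exact integral_abs_reKernel_mul_norm_le_right ha hδ (by fun_prop) (Real.sqrt_nonneg _)
    fun t ht => norm_sub_le_sqrt_integral_mul_sqrt_abs_sub hg ⟨le_rfl, by linarith⟩ ht

theorem abs_integral_ramp_mul_reKernel_le (ha : 0 < a) (hδ : 0 < δ) :
    |∫ y in (0 : ℝ)..(2 * a), ramp a y * reKernel a δ y| ≤ 2 / a := by
  have hr := continuous_ramp a
  have hq := continuous_reKernel (a := a) hδ
  have h2a : a ≤ 2 * a := by linarith
  set c := ∫ y in a..(2 * a), (ramp a y - 1) * reKernel a δ y with hc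
  have hsplit : ∫ y in (0 : ℝ)..(2 * a), ramp a y * reKernel a δ y
      = (∫ y in (0 : ℝ)..a, reKernel a δ y) + (∫ y in a..(2 * a), reKernel a δ y) + c := by
    have hleft : ∫ y in (0 : ℝ)..a, ramp a y * reKernel a δ y = ∫ y in (0 : ℝ)..a, reKernel a δ y :=
      intervalIntegral.integral_congr fun y hy => by
        rw [uIcc_of_le ha.le] at hy
        simp only [ramp_of_le ha hy.2, one_mul]
    rw [hc, ← intervalIntegral.integral_add_adjacent_intervals (b := a)
      (Continuous.intervalIntegrable (by fun_prop) _ _)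
      (Continuous.intervalIntegrable (by fun_prop) _ _), hleft, add_assoc,
      ← intervalIntegral.integral_add (Continuous.intervalIntegrable (by fun_prop) _ _)
        (Continuous.intervalIntegrable (by fun_prop) _ _)]
    simp only [sub_mul, one_mul, add_sub_cancel]
  have hcle : |c| ≤ 1 / a := by
    have hpt : ∀ y ∈ uIoc a (2 * a), ‖(ramp a y - 1) * reKernel a δ y‖ ≤ 1 / a ^ 2 := by
      intro y hy
      rw [uIoc_of_le h2a] at hy
      have habs : |ramp a y - 1| = |y - a| / a := by
        rw [ramp_of_ge ha hy.1.le, show 2 - y / a - 1 = -((y - a) / a) by field_simp; ring,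
          abs_neg, abs_div, abs_of_pos ha]
      rw [norm_mul, Real.norm_eq_abs, Real.norm_eq_abs, habs, le_div_iff₀ (by positivity)]
      calc |y - a| / a * |reKernel a δ y| * a ^ 2 = |reKernel a δ y| * (a * |y - a|) := by
            field_simp
        _ ≤ 1 := abs_reKernel_mul_le ha hδ (by linarith [hy.1])
    calc |c| ≤ 1 / a ^ 2 * |2 * a - a| := intervalIntegral.norm_integral_le_of_norm_le_const hpt
      _ = 1 / a := by rw [two_mul, add_sub_cancel_right, abs_of_pos ha]; field_simp
  calc _ ≤ 1 / a + 1 / a := by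
        rw [hsplit]; exact (abs_add_le _ _).trans (add_le_add (abs_integral_reKernel_le ha hδ) hcle)
    _ = 2 / a := by ring

theorem integral_ramp_smul_reKernel_smul [CompleteSpace E] {g : ℝ → E} (ha : 0 < a) (hδ : 0 < δ)
    (hg : Continuous g) :
    ∫ y in (0 : ℝ)..(2 * a), ramp a y • reKernel a δ y • g y
      = (∫ y in (0 : ℝ)..a, reKernel a δ y • (g y - g a))
        + (∫ y in a..(2 * a), ramp a y • reKernel a δ y • (g y - g a))
        + (∫ y in (0 : ℝ)..(2 * a), ramp a y * reKernel a δ y) • g a := by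
  have hr := continuous_ramp a
  have hq := continuous_reKernel (a := a) hδ
  have hleft : ∫ y in (0 : ℝ)..a, ramp a y • reKernel a δ y • (g y - g a)
      = ∫ y in (0 : ℝ)..a, reKernel a δ y • (g y - g a) :=
    intervalIntegral.integral_congr fun y hy => by
      rw [uIcc_of_le ha.le] at hy
      simp only [ramp_of_le ha hy.2, one_smul]
  rw [← hleft, intervalIntegral.integral_add_adjacent_intervals
    (Continuous.intervalIntegrable (by fun_prop) _ _)
    (Continuous.intervalIntegrable (by fun_prop) _ _),
    ← intervalIntegral.integral_smul_const, ← intervalIntegral.integral_add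
    (Continuous.intervalIntegrable (by fun_prop) _ _)
    (Continuous.intervalIntegrable (by fun_prop) _ _)]
  simp only [smul_sub, mul_smul, sub_add_cancel]

theorem sqrt_mul_norm_integral_reKernel_smul_sub_le [CompleteSpace E] {g : ℝ → E} (ha : 0 < a)
    (hδ : 0 < δ) (hg : ContDiff ℝ 1 g) :
    √a * ‖∫ y in (0 : ℝ)..a, reKernel a δ y • (g y - g a)‖
      ≤ √a * ‖∫ y in (0 : ℝ)..(2 * a), ramp a y • reKernel a δ y • g y‖
        + 2 * √(∫ y in a..(2 * a), ‖deriv g y‖ ^ 2) + 2 * (‖g a‖ / √a) := by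
  set S := ∫ y in (0 : ℝ)..(2 * a), ramp a y • reKernel a δ y • g y with hS
  set R := ∫ y in a..(2 * a), ramp a y • reKernel a δ y • (g y - g a)
  set K := ∫ y in a..(2 * a), ‖deriv g y‖ ^ 2
  set m := ∫ y in (0 : ℝ)..(2 * a), ramp a y * reKernel a δ y
  have hsa : 0 < √a := Real.sqrt_pos.2 ha
  have hR : ‖R‖ ≤ 2 * √K / √a := norm_integral_ramp_smul_reKernel_smul_sub_le ha hδ hg
  have hm : ‖m • g a‖ ≤ 2 / a * ‖g a‖ := by
    rw [norm_smul]
    exact mul_le_mul_of_nonneg_right (abs_integral_ramp_mul_reKernel_le ha hδ) (norm_nonneg _)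
  have hQ : ∫ y in (0 : ℝ)..a, reKernel a δ y • (g y - g a) = S - R - m • g a := by
    rw [hS, integral_ramp_smul_reKernel_smul ha hδ hg.continuous]; abel
  calc _ ≤ √a * (‖S‖ + ‖R‖ + ‖m • g a‖) := by
        rw [hQ]; gcongr
        exact (norm_sub_le _ _).trans (add_le_add_left (norm_sub_le _ _) _)
    _ ≤ √a * (‖S‖ + 2 * √K / √a + 2 / a * ‖g a‖) := by gcongr
    _ = √a * ‖S‖ + 2 * √K * (√a / √a) + 2 * ‖g a‖ * (√a / a) := by ring
    _ = _ := by rw [div_self hsa.ne', Real.sqrt_div_self]; ring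

end Ramp

section Energy

variable {k x y : ℝ} {u v : ℝ → ℂ}

/-- The square of the norm `‖(∂_y, k) u‖` over the interval `(x, y)`. -/
def energy (x y k : ℝ) (u : ℝ → ℂ) : ℝ :=
  (∫ t in x..y, ‖deriv u t‖ ^ 2) + k ^ 2 * ∫ t in x..y, ‖u t‖ ^ 2

/-- The sesquilinear form on `[0, 1]` whose quadratic form is `energy 0 1 k`. -/
def energyForm (k : ℝ) (u v : ℝ → ℂ) : ℂ :=
  ∫ t in (0 : ℝ)..1, (deriv u t * star (deriv v t) + (k : ℂ) ^ 2 * (u t * star (v t)))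

theorem integral_norm_sq_nonneg (hxy : x ≤ y) (u : ℝ → ℂ) : 0 ≤ ∫ t in x..y, ‖u t‖ ^ 2 :=
  intervalIntegral.integral_nonneg hxy fun _ _ => sq_nonneg _

theorem energy_nonneg (hxy : x ≤ y) (k : ℝ) (u : ℝ → ℂ) : 0 ≤ energy x y k u :=
  add_nonneg (integral_norm_sq_nonneg hxy _)
    (mul_nonneg (sq_nonneg k) (integral_norm_sq_nonneg hxy u))

theorem integral_norm_deriv_sq_le_energy (hxy : x ≤ y) (k : ℝ) (u : ℝ → ℂ) :
    ∫ t in x..y, ‖deriv u t‖ ^ 2 ≤ energy x y k u :=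
  le_add_of_nonneg_right (mul_nonneg (sq_nonneg k) (integral_norm_sq_nonneg hxy u))

theorem mul_integral_norm_sq_le_energy (hxy : x ≤ y) (k : ℝ) (u : ℝ → ℂ) :
    k ^ 2 * ∫ t in x..y, ‖u t‖ ^ 2 ≤ energy x y k u :=
  le_add_of_nonneg_left (integral_norm_sq_nonneg hxy _)

theorem integral_norm_deriv_sq_le_energy_of_subset (hu : ContDiff ℝ 1 u) (k : ℝ) {s t : ℝ}
    (hxs : x ≤ s) (hst : s ≤ t) (hty : t ≤ y) :
    ∫ r in s..t, ‖deriv u r‖ ^ 2 ≤ energy x y k u :=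
  (integral_mono_interval_of_continuous (hu.continuous_deriv_one.norm.pow 2)
    (fun _ => sq_nonneg _) hxs hst hty).trans
      (integral_norm_deriv_sq_le_energy (hxs.trans (hst.trans hty)) k u)

theorem energy_eq_integral (x y k : ℝ) (hu : ContDiff ℝ 1 u) :
    energy x y k u = ∫ t in x..y, (‖deriv u t‖ ^ 2 + k ^ 2 * ‖u t‖ ^ 2) := by
  have hc := hu.continuous
  have hd := hu.continuous_deriv_one
  rw [energy, intervalIntegral.integral_add (Continuous.intervalIntegrable (by fun_prop) _ _)
    (Continuous.intervalIntegrable (by fun_prop) _ _), intervalIntegral.integral_const_mul]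

theorem mul_star_self (z : ℂ) : z * star z = ((‖z‖ ^ 2 : ℝ) : ℂ) := by
  rw [Complex.ofReal_pow]
  exact Complex.mul_conj' z

theorem energyForm_self (hu : ContDiff ℝ 1 u) : energyForm k u u = energy 0 1 k u := by
  rw [energy_eq_integral 0 1 k hu, ← intervalIntegral.integral_ofReal, energyForm]
  refine intervalIntegral.integral_congr fun t _ => ?_
  simp only [mul_star_self]
  push_cast
  rfl

theorem norm_energyForm_sq_le (hu : ContDiff ℝ 1 u) (hv : ContDiff ℝ 1 v) :
    ‖energyForm k u v‖ ^ 2 ≤ energy 0 1 k u * energy 0 1 k v := by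
  have hcu := hu.continuous
  have hdu := hu.continuous_deriv_one
  have hcv := hv.continuous
  have hdv := hv.continuous_deriv_one
  have hpt (t : ℝ) : ‖deriv u t * star (deriv v t) + (k : ℂ) ^ 2 * (u t * star (v t))‖
      ≤ √(‖deriv u t‖ ^ 2 + k ^ 2 * ‖u t‖ ^ 2) * √(‖deriv v t‖ ^ 2 + k ^ 2 * ‖v t‖ ^ 2) := by
    rw [← Real.sqrt_mul (by positivity)]
    refine (norm_add_le _ _).trans (Real.le_sqrt_of_sq_le ?_)
    simp only [norm_mul, norm_star, norm_pow, Complex.norm_real, Real.norm_eq_abs, sq_abs]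
    linarith [mul_nonneg (sq_nonneg k) (sq_nonneg (‖deriv u t‖ * ‖v t‖ - ‖u t‖ * ‖deriv v t‖))]
  calc ‖energyForm k u v‖ ^ 2
      ≤ (∫ t in (0 : ℝ)..1, √(‖deriv u t‖ ^ 2 + k ^ 2 * ‖u t‖ ^ 2)
          * √(‖deriv v t‖ ^ 2 + k ^ 2 * ‖v t‖ ^ 2)) ^ 2 :=
        pow_le_pow_left₀ (norm_nonneg _) (intervalIntegral.norm_integral_le_of_norm_le zero_le_one
          (ae_of_all _ fun t _ => hpt t) (Continuous.intervalIntegrable (by fun_prop) _ _)) 2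
    _ ≤ (∫ t in (0 : ℝ)..1, √(‖deriv u t‖ ^ 2 + k ^ 2 * ‖u t‖ ^ 2) ^ 2)
          * ∫ t in (0 : ℝ)..1, √(‖deriv v t‖ ^ 2 + k ^ 2 * ‖v t‖ ^ 2) ^ 2 :=
        sq_integral_mul_le zero_le_one (by fun_prop) (by fun_prop)
    _ = _ := by
        rw [energy_eq_integral 0 1 k hu, energy_eq_integral 0 1 k hv]
        congr 1 <;> exact intervalIntegral.integral_congr fun t _ => Real.sq_sqrt (by positivity)

theorem integral_mul_star_eq_neg_energyForm {W : ℝ → ℂ} (hu : ContDiff ℝ 1 u) (hu1 : u 1 = 0)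
    (hv : ContDiff ℝ 2 v) (h0 : u 0 = 0 ∨ deriv v 0 = 0)
    (hW : ∀ t ∈ Set.Icc (0 : ℝ) 1, deriv (deriv v) t - (k : ℂ) ^ 2 * v t = W t) :
    ∫ t in (0 : ℝ)..1, u t * star (W t) = -energyForm k u v := by
  have hv' : ContDiff ℝ 1 (deriv v) := hv.deriv'
  have hcu := hu.continuous
  have hdu := hu.continuous_deriv_one
  have hcv := hv.continuous
  have hdv := hv'.continuous
  have hddv := hv'.continuous_deriv_one
  have hparts : ∫ t in (0 : ℝ)..1, (deriv u t * star (deriv v t) + u t * star (deriv (deriv v) t))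
      = 0 := by
    rw [intervalIntegral.integral_eq_sub_of_hasDerivAt
      (fun t _ => (hu.differentiable_one t).hasDerivAt.mul
        (hv'.differentiable_one t).hasDerivAt.star)
      (Continuous.intervalIntegrable (by fun_prop) _ _)]
    rcases h0 with h0 | h0 <;> simp [hu1, h0]
  rw [eq_neg_iff_add_eq_zero, energyForm, ← hparts,
    intervalIntegral.integral_congr (g := fun t => u t * star (deriv (deriv v) t - k ^ 2 * v t))
      fun t ht => by
        rw [Set.uIcc_of_le zero_le_one] at ht
        simp only [hW t ht],
    ← intervalIntegral.integral_add (Continuous.intervalIntegrable (by fun_prop) _ _)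
    (Continuous.intervalIntegrable (by fun_prop) _ _)]
  refine intervalIntegral.integral_congr fun t _ => ?_
  have hk : star (k : ℂ) = k := Complex.conj_ofReal k
  simp only [star_sub, star_mul', star_pow, hk]
  ring

end Energy

section HalfInterval

/-- The Rayleigh problem on `[0, 1]` with the conditions that the even and odd parts of a solution
on `[-1, 1]` satisfy at `0`: the first alternative of `parity` is the even one. -/
structure HalfRayleigh (k lam δ : ℝ) (f W Φ : ℝ → ℂ) : Prop where
  contDiff_f : ContDiff ℝ 1 f
  contDiff_W : ContDiff ℝ 1 W
  contDiff_Φ : ContDiff ℝ 2 Φ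
  f_one : f 1 = 0
  Φ_one : Φ 1 = 0
  rayleigh_eq : ∀ y ∈ Set.Icc (0 : ℝ) 1,
    ((1 : ℂ) - (y : ℂ) ^ 2 - (lam : ℂ) + Complex.I * (δ : ℂ)) * W y + 2 * Φ y = f y
  vorticity_eq : ∀ y ∈ Set.Icc (0 : ℝ) 1, deriv (deriv Φ) y - (k : ℂ) ^ 2 * Φ y = W y
  parity : deriv Φ 0 = 0 ∨ (f 0 = 0 ∧ Φ 0 = 0)

/-- The function `2Φ - f = -(1 - y² - λ + iδ) W`: unlike the vorticity `W` itself, it has an `H¹`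
bound that is uniform in `δ`. -/
def weightedVorticity (f Φ : ℝ → ℂ) (y : ℝ) : ℂ := 2 * Φ y - f y

variable {k lam δ a y : ℝ} {f W Φ : ℝ → ℂ}

theorem two_mul_eq_weightedVorticity_add (f Φ : ℝ → ℂ) (y : ℝ) :
    2 * Φ y = weightedVorticity f Φ y + f y := (sub_add_cancel _ _).symm

theorem integral_norm_sq_le_of_two_mul_eq_add {x y : ℝ} (hxy : x ≤ y) {u v w : ℝ → ℂ}
    (hu : Continuous u) (hv : Continuous v) (h : ∀ t, 2 * w t = u t + v t) :
    ∫ t in x..y, ‖w t‖ ^ 2 ≤ ((∫ t in x..y, ‖u t‖ ^ 2) + ∫ t in x..y, ‖v t‖ ^ 2) / 2 := by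
  have hw : Continuous w := by
    have : w = fun t => (u t + v t) / 2 := by ext t; rw [← h]; ring
    rw [this]; fun_prop
  rw [← intervalIntegral.integral_add (Continuous.intervalIntegrable (by fun_prop) _ _)
    (Continuous.intervalIntegrable (by fun_prop) _ _), ← intervalIntegral.integral_div]
  refine intervalIntegral.integral_mono_on hxy (Continuous.intervalIntegrable (by fun_prop) _ _)
    (Continuous.intervalIntegrable (by fun_prop) _ _) fun t _ => ?_
  have hn : 2 * ‖w t‖ ≤ ‖u t‖ + ‖v t‖ := by
    calc 2 * ‖w t‖ = ‖u t + v t‖ := by rw [← h, norm_mul, Complex.norm_two]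
      _ ≤ _ := norm_add_le _ _
  nlinarith [norm_nonneg (w t), sq_nonneg (‖u t‖ - ‖v t‖)]

namespace HalfRayleigh

theorem contDiff_weightedVorticity (h : HalfRayleigh k lam δ f W Φ) :
    ContDiff ℝ 1 (weightedVorticity f Φ) :=
  (contDiff_const.mul (h.contDiff_Φ.of_le one_le_two)).sub h.contDiff_f

theorem weightedVorticity_one (h : HalfRayleigh k lam δ f W Φ) : weightedVorticity f Φ 1 = 0 := by
  simp only [weightedVorticity, h.Φ_one, h.f_one, mul_zero, sub_zero]

theorem weightedVorticity_zero_or (h : HalfRayleigh k lam δ f W Φ) :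
    weightedVorticity f Φ 0 = 0 ∨ deriv Φ 0 = 0 :=
  h.parity.symm.imp_left fun h0 => by
    simp only [weightedVorticity, h0.1, h0.2, mul_zero, sub_zero]

theorem two_mul_deriv (h : HalfRayleigh k lam δ f W Φ) (y : ℝ) :
    2 * deriv Φ y = deriv (weightedVorticity f Φ) y + deriv f y := by
  have hΦ := (h.contDiff_Φ.differentiable two_ne_zero y).hasDerivAt
  have hf := (h.contDiff_f.differentiable_one y).hasDerivAt
  rw [show deriv (weightedVorticity f Φ) y = 2 * deriv Φ y - deriv f y from
    ((hΦ.const_mul 2).sub hf).deriv, sub_add_cancel]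

theorem energy_le (h : HalfRayleigh k lam δ f W Φ) :
    energy 0 1 k Φ ≤ (energy 0 1 k (weightedVorticity f Φ) + energy 0 1 k f) / 2 := by
  have hg := h.contDiff_weightedVorticity
  have hderiv := integral_norm_sq_le_of_two_mul_eq_add zero_le_one hg.continuous_deriv_one
    h.contDiff_f.continuous_deriv_one h.two_mul_deriv
  have hself := mul_le_mul_of_nonneg_left (integral_norm_sq_le_of_two_mul_eq_add zero_le_one
    hg.continuous h.contDiff_f.continuous (two_mul_eq_weightedVorticity_add f Φ))
    (sq_nonneg k)
  unfold energy
  linarith!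

theorem two_mul_integral_mul_norm_sq (h : HalfRayleigh k lam δ f W Φ) :
    2 * ∫ y in (0 : ℝ)..1, ((1 - y ^ 2 - lam : ℝ) + Complex.I * δ) * (‖W y‖ ^ 2 : ℝ)
      = energy 0 1 k (weightedVorticity f Φ) + energyForm k (weightedVorticity f Φ) f := by
  set g := weightedVorticity f Φ with hg_def
  have hg : ContDiff ℝ 1 g := h.contDiff_weightedVorticity
  have hcg := hg.continuous
  have hdg := hg.continuous_deriv_one
  have hcf := h.contDiff_f.continuous
  have hdf := h.contDiff_f.continuous_deriv_one
  have hpar := integral_mul_star_eq_neg_energyForm hg h.weightedVorticity_one h.contDiff_Φ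
    h.weightedVorticity_zero_or h.vorticity_eq
  have hlin : energyForm k g g + energyForm k g f = 2 * energyForm k g Φ := by
    unfold energyForm
    rw [← intervalIntegral.integral_add (Continuous.intervalIntegrable (by fun_prop) _ _)
      (Continuous.intervalIntegrable (by fun_prop) _ _), ← intervalIntegral.integral_const_mul]
    refine intervalIntegral.integral_congr fun y _ => ?_
    have hd := congrArg star (h.two_mul_deriv y)
    have hs := congrArg star (two_mul_eq_weightedVorticity_add f Φ y)
    simp only [star_mul', star_add, Complex.star_def, map_ofNat] at hd hs
    rw [← hg_def] at hd hs
    simp only [Complex.star_def]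
    linear_combination -(deriv g y) * hd - (k : ℂ) ^ 2 * g y * hs
  rw [← energyForm_self hg, hlin, ← neg_eq_iff_eq_neg.2 hpar, ← intervalIntegral.integral_neg]
  congr 1
  refine intervalIntegral.integral_congr fun y hy => ?_
  rw [Set.uIcc_of_le zero_le_one] at hy
  simp only [hg_def, weightedVorticity, ← h.rayleigh_eq y hy, ← mul_star_self]
  push_cast
  ring

theorem two_mul_integral_mul_norm_sq_eq (h : HalfRayleigh k lam δ f W Φ) :
    2 * ∫ y in (0 : ℝ)..1, (1 - y ^ 2 - lam) * ‖W y‖ ^ 2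
      = energy 0 1 k (weightedVorticity f Φ) + (energyForm k (weightedVorticity f Φ) f).re := by
  have hW := h.contDiff_W.continuous
  have hre := congrArg Complex.re h.two_mul_integral_mul_norm_sq
  rw [← intervalIntegral.integral_const_mul, ← Complex.reCLM_apply,
    ← Complex.reCLM.intervalIntegral_comp_comm (Continuous.intervalIntegrable (by fun_prop) _ _),
    Complex.add_re, Complex.ofReal_re] at hre
  rw [← hre, ← intervalIntegral.integral_const_mul]
  refine intervalIntegral.integral_congr fun y _ => ?_
  simp [-Complex.ofReal_pow]

theorem two_mul_integral_norm_sq_eq (h : HalfRayleigh k lam δ f W Φ) :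
    2 * (δ * ∫ y in (0 : ℝ)..1, ‖W y‖ ^ 2) = (energyForm k (weightedVorticity f Φ) f).im := by
  have hW := h.contDiff_W.continuous
  have him := congrArg Complex.im h.two_mul_integral_mul_norm_sq
  rw [← intervalIntegral.integral_const_mul, ← Complex.imCLM_apply,
    ← Complex.imCLM.intervalIntegral_comp_comm (Continuous.intervalIntegrable (by fun_prop) _ _),
    Complex.add_im, Complex.ofReal_im, zero_add] at him
  rw [← him, ← intervalIntegral.integral_const_mul, ← intervalIntegral.integral_const_mul]
  refine intervalIntegral.integral_congr fun y _ => ?_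
  simp [-Complex.ofReal_pow]

theorem norm_energyForm_le (h : HalfRayleigh k lam δ f W Φ) :
    ‖energyForm k (weightedVorticity f Φ) f‖
      ≤ √(energy 0 1 k (weightedVorticity f Φ)) * √(energy 0 1 k f) := by
  rw [← Real.sqrt_mul (energy_nonneg zero_le_one k _)]
  exact Real.le_sqrt_of_sq_le (norm_energyForm_sq_le h.contDiff_weightedVorticity h.contDiff_f)

theorem abs_two_mul_integral_mul_norm_sq_sub_le (h : HalfRayleigh k lam δ f W Φ) :
    |2 * (∫ y in (0 : ℝ)..1, (1 - y ^ 2 - lam) * ‖W y‖ ^ 2) - energy 0 1 k (weightedVorticity f Φ)|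
      ≤ √(energy 0 1 k (weightedVorticity f Φ)) * √(energy 0 1 k f) := by
  rw [h.two_mul_integral_mul_norm_sq_eq, add_sub_cancel_left]
  exact (Complex.abs_re_le_norm _).trans h.norm_energyForm_le

theorem two_mul_integral_norm_sq_le (h : HalfRayleigh k lam δ f W Φ) :
    2 * (δ * ∫ y in (0 : ℝ)..1, ‖W y‖ ^ 2)
      ≤ √(energy 0 1 k (weightedVorticity f Φ)) * √(energy 0 1 k f) := by
  rw [h.two_mul_integral_norm_sq_eq]
  exact (Complex.im_le_norm _).trans h.norm_energyForm_le

end HalfRayleigh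

end HalfInterval

section Coercivity

theorem sqrt_two_le : √2 ≤ 1415 / 1000 :=
  Real.sqrt_le_iff.2 ⟨by norm_num, by norm_num⟩

variable {k lam δ a R y : ℝ} {f W Φ : ℝ → ℂ}

namespace HalfRayleigh

theorem eq_smul_weightedVorticity (h : HalfRayleigh k lam δ f W Φ) (hδ : 0 < δ)
    (ha : a ^ 2 = 1 - lam) (hy : y ∈ Set.Icc (0 : ℝ) 1) :
    W y = Complex.I • imKernel a δ y • weightedVorticity f Φ y
      - reKernel a δ y • weightedVorticity f Φ y := by
  have hden : (((a ^ 2 - y ^ 2) ^ 2 + δ ^ 2 : ℝ) : ℂ) ≠ 0 := by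
    exact_mod_cast (by positivity : (a ^ 2 - y ^ 2) ^ 2 + δ ^ 2 ≠ 0)
  have hlam : (lam : ℂ) = 1 - (a : ℂ) ^ 2 := by
    rw [← Complex.ofReal_pow, ha]; push_cast; ring
  simp only [weightedVorticity, ← h.rayleigh_eq y hy, reKernel, imKernel, Complex.real_smul,
    smul_eq_mul, Complex.ofReal_div, hlam]
  field_simp
  push_cast
  ring_nf
  simp only [Complex.I_sq]
  ring

theorem norm_weightedVorticity_sq (h : HalfRayleigh k lam δ f W Φ) (ha : a ^ 2 = 1 - lam)
    (hy : y ∈ Set.Icc (0 : ℝ) 1) :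
    ‖weightedVorticity f Φ y‖ ^ 2 = ((a ^ 2 - y ^ 2) ^ 2 + δ ^ 2) * ‖W y‖ ^ 2 := by
  have hg : weightedVorticity f Φ y = -((((a ^ 2 - y ^ 2 : ℝ) : ℂ) + δ * Complex.I) * W y) := by
    rw [weightedVorticity, ← h.rayleigh_eq y hy, ha]
    push_cast
    ring
  rw [hg, norm_neg, norm_mul, mul_pow, Complex.sq_norm (_ + _), Complex.normSq_add_mul_I]

theorem integral_imKernel_eq (h : HalfRayleigh k lam δ f W Φ) (hδ : 0 < δ) (ha : a ^ 2 = 1 - lam) :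
    ∫ y in (0 : ℝ)..1, imKernel a δ y * ‖weightedVorticity f Φ y‖ ^ 2
      = δ * ∫ y in (0 : ℝ)..1, ‖W y‖ ^ 2 := by
  rw [← intervalIntegral.integral_const_mul]
  refine intervalIntegral.integral_congr fun y hy => ?_
  rw [Set.uIcc_of_le zero_le_one] at hy
  have hden : (a ^ 2 - y ^ 2) ^ 2 + δ ^ 2 ≠ 0 := by positivity
  simp only [h.norm_weightedVorticity_sq ha hy, imKernel]
  field_simp

theorem integral_reKernel_eq (h : HalfRayleigh k lam δ f W Φ) (hδ : 0 < δ) (ha : a ^ 2 = 1 - lam) :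
    ∫ y in (0 : ℝ)..1, reKernel a δ y * ‖weightedVorticity f Φ y‖ ^ 2
      = ∫ y in (0 : ℝ)..1, (1 - y ^ 2 - lam) * ‖W y‖ ^ 2 := by
  refine intervalIntegral.integral_congr fun y hy => ?_
  rw [Set.uIcc_of_le zero_le_one] at hy
  have hden : (a ^ 2 - y ^ 2) ^ 2 + δ ^ 2 ≠ 0 := by positivity
  simp only [h.norm_weightedVorticity_sq ha hy, reKernel]
  rw [show 1 - y ^ 2 - lam = a ^ 2 - y ^ 2 by rw [ha]; ring]
  field_simp

theorem sqrt_mul_norm_integral_ramp_smul_reKernel_smul_le (h : HalfRayleigh k lam δ f W Φ)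
    (hδ : 0 < δ) (ha : 0 < a) (haa : a ^ 2 = 1 - lam) (h2a : 2 * a ≤ 1) (h0 : deriv Φ 0 = 0) :
    √a * ‖∫ y in (0 : ℝ)..(2 * a), ramp a y • reKernel a δ y • weightedVorticity f Φ y‖
      ≤ √(∫ y in a..(2 * a), ‖deriv Φ y‖ ^ 2)
        + √2 * (|k| * a) * √(k ^ 2 * ∫ y in (0 : ℝ)..(2 * a), ‖Φ y‖ ^ 2)
        + 2 * √(∫ y in (0 : ℝ)..(2 * a), imKernel a δ y * ‖weightedVorticity f Φ y‖ ^ 2) := by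
  set g := weightedVorticity f Φ
  have hg : Continuous g := h.contDiff_weightedVorticity.continuous
  have hΦ := h.contDiff_Φ.continuous
  have hΦ'' : Continuous (deriv (deriv Φ)) :=
    (h.contDiff_Φ.deriv' : ContDiff ℝ 1 (deriv Φ)).continuous_deriv_one
  have hr := continuous_ramp a
  have hd := continuous_imKernel (a := a) hδ
  have hsplit : ∫ y in (0 : ℝ)..(2 * a), ramp a y • reKernel a δ y • g y
      = Complex.I • (∫ y in (0 : ℝ)..(2 * a), ramp a y • imKernel a δ y • g y)
        - ∫ y in (0 : ℝ)..(2 * a), ramp a y • (deriv (deriv Φ) y - k ^ 2 • Φ y) := by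
    rw [← intervalIntegral.integral_smul, ← intervalIntegral.integral_sub
      (Continuous.intervalIntegrable (by fun_prop) _ _)
      (Continuous.intervalIntegrable (by fun_prop) _ _)]
    refine intervalIntegral.integral_congr fun y hy => ?_
    rw [Set.uIcc_of_le (by positivity)] at hy
    have hy1 : y ∈ Set.Icc (0 : ℝ) 1 := ⟨hy.1, hy.2.trans h2a⟩
    have hW := (h.vorticity_eq y hy1).trans (h.eq_smul_weightedVorticity hδ haa hy1)
    simp only [Complex.real_smul, smul_eq_mul, Complex.ofReal_pow] at hW ⊢
    linear_combination (ramp a y : ℂ) * hW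
  have him := norm_integral_ramp_smul_imKernel_smul_le ha hδ hg
  have hode := norm_integral_ramp_smul_sub_le (k := k) h.contDiff_Φ ha h0
  have htri := mul_le_mul_of_nonneg_left (norm_sub_le
    (Complex.I • ∫ y in (0 : ℝ)..(2 * a), ramp a y • imKernel a δ y • g y)
    (∫ y in (0 : ℝ)..(2 * a), ramp a y • (deriv (deriv Φ) y - k ^ 2 • Φ y))) (Real.sqrt_nonneg a)
  rw [norm_smul, Complex.norm_I, one_mul, ← hsplit] at htri
  linarith

theorem sqrt_mul_norm_integral_reKernel_smul_sub_le_sqrt (h : HalfRayleigh k lam δ f W Φ)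
    (hδ : 0 < δ) (hk : 0 ≤ k) (ha : 0 < a) (haa : a ^ 2 = 1 - lam) (h2a : 2 * a ≤ 1)
    (hka : k * a ≤ 1 / 2) (h0 : deriv Φ 0 = 0)
    (hΦ' : ∫ y in a..1, ‖deriv Φ y‖ ^ 2 ≤ 2 * R) (hΦ : k ^ 2 * ∫ y in (0 : ℝ)..1, ‖Φ y‖ ^ 2 ≤ 2 * R)
    (him : ∫ y in (0 : ℝ)..1, imKernel a δ y * ‖weightedVorticity f Φ y‖ ^ 2 ≤ R)
    (hg' : ∫ y in a..1, ‖deriv (weightedVorticity f Φ) y‖ ^ 2 ≤ 2 * R)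
    (hga : ‖weightedVorticity f Φ a‖ ^ 2 ≤ a * R) :
    √a * ‖∫ y in (0 : ℝ)..a,
        reKernel a δ y • (weightedVorticity f Φ y - weightedVorticity f Φ a)‖ ≤ 19 / 2 * √R := by
  have hg := h.contDiff_weightedVorticity
  have hcg := hg.continuous
  have hdg := hg.continuous_deriv_one
  have hcΦ := h.contDiff_Φ.continuous
  have hdΦ := h.contDiff_Φ.continuous_deriv one_le_two
  have hd := continuous_imKernel (a := a) hδ
  have hsub {u : ℝ → ℝ} (hu : Continuous u) (hu0 : ∀ t, 0 ≤ u t) {x : ℝ} (hx : x ≤ 2 * a) :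
      ∫ y in x..(2 * a), u y ≤ ∫ y in x..1, u y :=
    integral_mono_interval_of_continuous hu hu0 le_rfl hx h2a
  have hramp := h.sqrt_mul_norm_integral_ramp_smul_reKernel_smul_le hδ ha haa h2a h0
  have hjump := sqrt_mul_norm_integral_reKernel_smul_sub_le ha hδ hg
  have hsΦ' : √(∫ y in a..(2 * a), ‖deriv Φ y‖ ^ 2) ≤ √(2 * R) := Real.sqrt_le_sqrt
    ((hsub (by fun_prop) (fun _ => sq_nonneg _) (by linarith)).trans hΦ')
  have hsΦ : √(k ^ 2 * ∫ y in (0 : ℝ)..(2 * a), ‖Φ y‖ ^ 2) ≤ √(2 * R) := Real.sqrt_le_sqrt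
    ((mul_le_mul_of_nonneg_left (hsub (by fun_prop) (fun _ => sq_nonneg _) (by linarith))
      (sq_nonneg k)).trans hΦ)
  have hsim : √(∫ y in (0 : ℝ)..(2 * a), imKernel a δ y * ‖weightedVorticity f Φ y‖ ^ 2) ≤ √R :=
    Real.sqrt_le_sqrt ((hsub (by fun_prop) (fun t => mul_nonneg (imKernel_nonneg hδ t)
      (sq_nonneg _)) (by linarith)).trans him)
  have hsg' : √(∫ y in a..(2 * a), ‖deriv (weightedVorticity f Φ) y‖ ^ 2) ≤ √(2 * R) :=
    Real.sqrt_le_sqrt ((hsub (by fun_prop) (fun _ => sq_nonneg _) (by linarith)).trans hg')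
  have hsga : ‖weightedVorticity f Φ a‖ / √a ≤ √R := by
    rw [div_le_iff₀' (Real.sqrt_pos.2 ha), ← Real.sqrt_mul ha.le]
    exact Real.le_sqrt_of_sq_le hga
  have hlow : √2 * (|k| * a) * √(k ^ 2 * ∫ y in (0 : ℝ)..(2 * a), ‖Φ y‖ ^ 2)
      ≤ √2 * (1 / 2) * √(2 * R) := by
    rw [abs_of_nonneg hk]
    gcongr
  have htwo : √(2 * R) = √2 * √R := Real.sqrt_mul zero_le_two R
  have hprod : √2 * √R ≤ 1415 / 1000 * √R :=
    mul_le_mul_of_nonneg_right sqrt_two_le (Real.sqrt_nonneg R)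
  have hself : √2 * (1 / 2) * (√2 * √R) = √R := by
    linear_combination (√R / 2) * Real.mul_self_sqrt zero_le_two
  rw [htwo] at hsΦ' hlow hsg'
  linarith [Real.sqrt_nonneg R]

theorem norm_sub_sq_le_of_deriv_eq_zero (h : HalfRayleigh k lam δ f W Φ)
    (hδ : 0 < δ) (hk : 0 ≤ k) (ha : 0 < a) (haa : a ^ 2 = 1 - lam) (hδa : δ ≤ a ^ 2)
    (h2a : 2 * a ≤ 1) (hka : k * a ≤ 1 / 2) (h0 : deriv Φ 0 = 0)
    (hΦ' : ∫ y in a..1, ‖deriv Φ y‖ ^ 2 ≤ 2 * R) (hΦ : k ^ 2 * ∫ y in (0 : ℝ)..1, ‖Φ y‖ ^ 2 ≤ 2 * R)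
    (him : ∫ y in (0 : ℝ)..1, imKernel a δ y * ‖weightedVorticity f Φ y‖ ^ 2 ≤ R)
    (hg' : ∫ y in a..1, ‖deriv (weightedVorticity f Φ) y‖ ^ 2 ≤ 2 * R)
    (hga : ‖weightedVorticity f Φ a‖ ^ 2 ≤ a * R)
    (hD : ∫ y in (0 : ℝ)..a, ‖hardyDefect (a ^ 2 + δ) a (weightedVorticity f Φ) y‖ ^ 2 ≤ 2 * R) :
    ‖weightedVorticity f Φ 0 - weightedVorticity f Φ a‖ ^ 2 ≤ 13000 * (a * R) := by
  have hR : 0 ≤ R := (intervalIntegral.integral_nonneg zero_le_one fun t _ =>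
    mul_nonneg (imKernel_nonneg hδ t) (sq_nonneg _)).trans him
  have hQ := h.sqrt_mul_norm_integral_reKernel_smul_sub_le_sqrt hδ hk ha haa h2a hka h0 hΦ' hΦ him
    hg' hga
  have hjump := norm_sub_le_integral_reKernel_smul h.contDiff_weightedVorticity ha hδ hδa
  set Q := ‖∫ y in (0 : ℝ)..a,
    reKernel a δ y • (weightedVorticity f Φ y - weightedVorticity f Φ a)‖
  have hsqrt2 := sqrt_two_le
  have hle : ‖weightedVorticity f Φ 0 - weightedVorticity f Φ a‖ ≤ 112 * (√a * √R) :=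
    calc _ ≤ 8 * a * Q + 24 * √a * √(2 * R) := hjump.trans (by gcongr)
      _ = 8 * √a * (√a * Q) + 24 * √a * (√2 * √R) := by
          rw [Real.sqrt_mul zero_le_two]
          linear_combination -8 * Q * Real.mul_self_sqrt ha.le
      _ ≤ 8 * √a * (19 / 2 * √R) + 24 * √a * (1415 / 1000 * √R) := by gcongr
      _ ≤ _ := by linarith [mul_nonneg (Real.sqrt_nonneg a) (Real.sqrt_nonneg R)]
  calc _ ≤ (112 * (√a * √R)) ^ 2 := pow_le_pow_left₀ (norm_nonneg _) hle 2
    _ = 112 ^ 2 * (a * R) := by rw [mul_pow, mul_pow, Real.sq_sqrt ha.le, Real.sq_sqrt hR]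
    _ ≤ _ := by linarith [mul_nonneg ha.le hR]

end HalfRayleigh

end Coercivity

section CoercivityBound

variable {k lam δ a b R : ℝ} {f W Φ : ℝ → ℂ}

theorem norm_zero_sq_sq_le {g : ℝ → ℂ} (hg : ContDiff ℝ 1 g) (h1 : g 1 = 0) :
    (‖g 0‖ ^ 2) ^ 2
      ≤ 4 * ((∫ y in (0 : ℝ)..1, ‖g y‖ ^ 2) * ∫ y in (0 : ℝ)..1, ‖deriv g y‖ ^ 2) := by
  have hc := hg.continuous
  have hc' := hg.continuous_deriv_one
  have hftc : ∫ y in (0 : ℝ)..1, (2 * inner ℝ (g y) (deriv g y) : ℝ) = ‖g 1‖ ^ 2 - ‖g 0‖ ^ 2 :=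
    intervalIntegral.integral_eq_sub_of_hasDerivAt
      (fun y _ => (hg.differentiable_one y).hasDerivAt.norm_sq)
      (Continuous.intervalIntegrable (by fun_prop) _ _)
  have hle : ‖g 0‖ ^ 2 ≤ 2 * ∫ y in (0 : ℝ)..1, ‖g y‖ * ‖deriv g y‖ := by
    rw [h1, norm_zero, zero_pow two_ne_zero, zero_sub, ← neg_eq_iff_eq_neg,
      ← intervalIntegral.integral_neg] at hftc
    rw [← hftc, ← intervalIntegral.integral_const_mul]
    refine intervalIntegral.integral_mono_on zero_le_one
      (Continuous.intervalIntegrable (by fun_prop) _ _)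
      (Continuous.intervalIntegrable (by fun_prop) _ _) fun y _ => ?_
    linarith [neg_le_of_abs_le (abs_real_inner_le_norm (g y) (deriv g y))]
  have hcs := sq_integral_mul_le zero_le_one (p := fun y => ‖g y‖) (r := fun y => ‖deriv g y‖)
    (by fun_prop) (by fun_prop)
  calc (‖g 0‖ ^ 2) ^ 2 ≤ (2 * ∫ y in (0 : ℝ)..1, ‖g y‖ * ‖deriv g y‖) ^ 2 :=
        pow_le_pow_left₀ (sq_nonneg _) hle 2
    _ ≤ _ := by rw [mul_pow]; linarith

theorem norm_zero_sq_div_le {g : ℝ → ℂ} (hg : ContDiff ℝ 1 g) (h1 : g 1 = 0) (ha : 0 < a)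
    (hka : 1 / 2 ≤ k * a) :
    ‖g 0‖ ^ 2 / a ≤ (∫ y in (0 : ℝ)..1, ‖deriv g y‖ ^ 2) / 48
      + 192 * (k ^ 2 * ∫ y in (0 : ℝ)..1, ‖g y‖ ^ 2) := by
  have hK := integral_norm_sq_nonneg zero_le_one (deriv g)
  have hN := integral_norm_sq_nonneg zero_le_one g
  have hsq := norm_zero_sq_sq_le hg h1
  set K := ∫ y in (0 : ℝ)..1, ‖deriv g y‖ ^ 2
  set N := ∫ y in (0 : ℝ)..1, ‖g y‖ ^ 2
  have hka2 : 1 ≤ 4 * (k * a) ^ 2 := by nlinarith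
  rw [div_le_iff₀ ha]
  refine abs_le_of_sq_le_sq' ?_ (by positivity) |>.2
  calc (‖g 0‖ ^ 2) ^ 2 ≤ 4 * (N * K) * 1 := by rw [mul_one]; exact hsq
    _ ≤ 4 * (N * K) * (4 * (k * a) ^ 2) := by gcongr
    _ = 4 * (K / 48) * (192 * (k ^ 2 * N)) * a ^ 2 := by ring
    _ ≤ (K / 48 + 192 * (k ^ 2 * N)) ^ 2 * a ^ 2 := by
        gcongr
        nlinarith [sq_nonneg (K / 48 - 192 * (k ^ 2 * N))]
    _ = _ := by rw [mul_pow]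

theorem norm_sub_sq_div_le_of_half_le {g : ℝ → ℂ} (hg : ContDiff ℝ 1 g) (h1 : g 1 = 0)
    (ha : 0 < a) (hka : 1 / 2 ≤ k * a) (b : ℝ) :
    ‖g 0 - g b‖ ^ 2 / a
      ≤ energy 0 1 k g / 24 + 384 * (k ^ 2 * ∫ y in (0 : ℝ)..1, ‖g y‖ ^ 2)
        + 2 * (‖g b‖ ^ 2 / a) := by
  have hzero := norm_zero_sq_div_le hg h1 ha hka
  have hK := integral_norm_deriv_sq_le_energy zero_le_one k g
  have htri : ‖g 0 - g b‖ ^ 2 ≤ 2 * ‖g 0‖ ^ 2 + 2 * ‖g b‖ ^ 2 := by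
    have := pow_le_pow_left₀ (norm_nonneg _) (norm_sub_le (g 0) (g b)) 2
    linarith [sq_nonneg (‖g 0‖ - ‖g b‖)]
  have hdiv := div_le_div_of_nonneg_right htri ha.le
  rw [add_div, mul_div_assoc, mul_div_assoc] at hdiv
  linarith

theorem energy_le_hardyDefect {g : ℝ → ℂ} (hg : ContDiff ℝ 1 g) (hδ : 0 < δ) (ha : 0 < a)
    (hb : 0 ≤ b) (hba : b ≤ a) (hb1 : b ≤ 1) :
    energy 0 1 k g
      ≤ 4 * ((∫ y in b..1, ‖deriv g y‖ ^ 2)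
          + (∫ y in (0 : ℝ)..b, ‖hardyDefect (a ^ 2 + δ) b g y‖ ^ 2)
          + k ^ 2 * ∫ y in (0 : ℝ)..1, ‖g y‖ ^ 2)
        + 3 * (‖g 0 - g b‖ ^ 2 / a) := by
  have hg' := hg.continuous_deriv_one
  have hA : √(a ^ 2 + δ) ^ 2 = a ^ 2 + δ := Real.sq_sqrt (by positivity)
  have haA : a < √(a ^ 2 + δ) := Real.lt_sqrt_of_sq_lt (by linarith)
  have hhardy := integral_norm_deriv_sq_le_hardyDefect hg hb (hba.trans_lt haA)
  rw [hA] at hhardy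
  have hdiv : ‖g 0 - g b‖ ^ 2 / √(a ^ 2 + δ) ≤ ‖g 0 - g b‖ ^ 2 / a := by gcongr
  have hsplit := intervalIntegral.integral_add_adjacent_intervals (μ := volume)
    (f := fun y => ‖deriv g y‖ ^ 2) (a := 0) (b := b) (c := 1)
    (Continuous.intervalIntegrable (by fun_prop) _ _)
    (Continuous.intervalIntegrable (by fun_prop) _ _)
  have hKout := integral_norm_sq_nonneg hb1 (deriv g)
  have hN := mul_nonneg (sq_nonneg k) (integral_norm_sq_nonneg zero_le_one g)
  rw [energy, ← hsplit]
  linarith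

namespace HalfRayleigh

theorem integral_imKernel_le (h : HalfRayleigh k lam δ f W Φ) (hδ : 0 < δ)
    (haa : a ^ 2 = 1 - lam) :
    2 * ∫ y in (0 : ℝ)..1, imKernel a δ y * ‖weightedVorticity f Φ y‖ ^ 2
      ≤ √(energy 0 1 k (weightedVorticity f Φ)) * √(energy 0 1 k f) := by
  rw [h.integral_imKernel_eq hδ haa]
  exact h.two_mul_integral_norm_sq_le

theorem integral_deriv_add_hardyDefect_add_le (h : HalfRayleigh k lam δ f W Φ) (hδ : 0 < δ)
    (ha : 0 < a) (haa : a ^ 2 = 1 - lam) (hb : b = min a 1) :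
    (∫ y in b..1, ‖deriv (weightedVorticity f Φ) y‖ ^ 2)
        + (∫ y in (0 : ℝ)..b, ‖hardyDefect (a ^ 2 + δ) b (weightedVorticity f Φ) y‖ ^ 2)
        + k ^ 2 * ∫ y in (0 : ℝ)..1, ‖weightedVorticity f Φ y‖ ^ 2
      ≤ 3 * (√(energy 0 1 k (weightedVorticity f Φ)) * √(energy 0 1 k f))
        + 18 * (‖weightedVorticity f Φ b‖ ^ 2 / a)
        + 16 * (√(‖weightedVorticity f Φ b‖ ^ 2 / a)
          * √(energy 0 1 k (weightedVorticity f Φ))) := by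
  have hg := h.contDiff_weightedVorticity
  have hg' := hg.continuous_deriv_one
  have him := h.integral_imKernel_le hδ haa
  have hid := (abs_le.1 h.abs_two_mul_integral_mul_norm_sq_sub_le).1
  have hq := integral_reKernel_mul_norm_sq_le_hardyDefect ha hδ hg h.weightedVorticity_one hb
  rw [h.integral_reKernel_eq hδ haa] at hq
  have hsplit := intervalIntegral.integral_add_adjacent_intervals (μ := volume)
    (f := fun y => ‖deriv (weightedVorticity f Φ) y‖ ^ 2) (a := 0) (b := b) (c := 1)
    (Continuous.intervalIntegrable (by fun_prop) _ _)
    (Continuous.intervalIntegrable (by fun_prop) _ _)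
  have hΓ : ‖weightedVorticity f Φ b‖ / √a = √(‖weightedVorticity f Φ b‖ ^ 2 / a) := by
    rw [Real.sqrt_div (sq_nonneg _), Real.sqrt_sq (norm_nonneg _)]
  have hK : √(∫ y in (0 : ℝ)..1, ‖deriv (weightedVorticity f Φ) y‖ ^ 2)
      ≤ √(energy 0 1 k (weightedVorticity f Φ)) :=
    Real.sqrt_le_sqrt (integral_norm_deriv_sq_le_energy zero_le_one k _)
  rw [mul_div_right_comm, hΓ] at hq
  have hΓK := mul_le_mul_of_nonneg_left hK (Real.sqrt_nonneg (‖weightedVorticity f Φ b‖ ^ 2 / a))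
  have henergy : energy 0 1 k (weightedVorticity f Φ)
      = (∫ y in (0 : ℝ)..1, ‖deriv (weightedVorticity f Φ) y‖ ^ 2)
        + k ^ 2 * ∫ y in (0 : ℝ)..1, ‖weightedVorticity f Φ y‖ ^ 2 := rfl
  linarith

theorem norm_sq_div_le {M : ℝ} (h : HalfRayleigh k lam δ f W Φ) (hδ : 0 < δ) (ha : 0 < a)
    (haa : a ^ 2 = 1 - lam) (hb : b = min a 1) (hM : 1 ≤ M) (hMa : M * δ ≤ a ^ 2) :
    ‖weightedVorticity f Φ b‖ ^ 2 / a
      ≤ 5 * (√(energy 0 1 k (weightedVorticity f Φ)) * √(energy 0 1 k f))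
        + 2 / M * energy 0 1 k (weightedVorticity f Φ) := by
  have hg := h.contDiff_weightedVorticity
  have hcg := hg.continuous
  have hg' := hg.continuous_deriv_one
  have hE := energy_nonneg zero_le_one k (weightedVorticity f Φ)
  rcases le_total a 1 with ha1 | ha1
  · rw [hb, min_eq_left ha1]
    have hd := continuous_imKernel (a := a) hδ
    have him := h.integral_imKernel_le hδ haa
    have hpt := norm_sq_le_integral_imKernel ha hδ (by nlinarith) hg
    have hsub := integral_mono_interval_of_continuous
      (u := fun y => imKernel a δ y * ‖weightedVorticity f Φ y‖ ^ 2) (by fun_prop)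
      (fun t => mul_nonneg (imKernel_nonneg hδ t) (sq_nonneg _)) le_rfl ha.le ha1
    have hK := integral_norm_deriv_sq_le_energy_of_subset hg k le_rfl ha.le ha1
    have hδM : δ / a ^ 2 ≤ 1 / M := by
      rw [div_le_div_iff₀ (by positivity) (by linarith)]; linarith
    calc _ ≤ (10 * a * (∫ y in (0 : ℝ)..a, imKernel a δ y * ‖weightedVorticity f Φ y‖ ^ 2)
          + 2 * (δ / a) * ∫ y in (0 : ℝ)..a, ‖deriv (weightedVorticity f Φ) y‖ ^ 2) / a := by gcongr
      _ = 10 * (∫ y in (0 : ℝ)..a, imKernel a δ y * ‖weightedVorticity f Φ y‖ ^ 2)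
          + 2 * (δ / a ^ 2) * ∫ y in (0 : ℝ)..a, ‖deriv (weightedVorticity f Φ) y‖ ^ 2 := by
        field_simp
      _ ≤ 10 * (∫ y in (0 : ℝ)..a, imKernel a δ y * ‖weightedVorticity f Φ y‖ ^ 2)
          + 2 * (1 / M) * energy 0 1 k (weightedVorticity f Φ) := by
        gcongr
        exact integral_norm_sq_nonneg ha.le _
      _ ≤ _ := by rw [mul_one_div]; linarith
  · rw [hb, min_eq_right ha1, h.weightedVorticity_one, norm_zero, zero_pow two_ne_zero, zero_div]
    positivity

theorem norm_sub_sq_le_of_deriv_zero_eq_zero (h : HalfRayleigh k lam δ f W Φ) (hδ : 0 < δ)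
    (hk : 0 ≤ k) (ha : 0 < a) (haa : a ^ 2 = 1 - lam) (hδa : δ ≤ a ^ 2) (h2a : 2 * a ≤ 1)
    (hka : k * a ≤ 1 / 2) (h0 : deriv Φ 0 = 0)
    (hΓ : ‖weightedVorticity f Φ a‖ ^ 2 / a ≤ R) (hf : energy 0 1 k f ≤ R)
    (him : ∫ y in (0 : ℝ)..1, imKernel a δ y * ‖weightedVorticity f Φ y‖ ^ 2 ≤ R)
    (hR : (∫ y in a..1, ‖deriv (weightedVorticity f Φ) y‖ ^ 2)
        + (∫ y in (0 : ℝ)..a, ‖hardyDefect (a ^ 2 + δ) a (weightedVorticity f Φ) y‖ ^ 2)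
        + k ^ 2 * ∫ y in (0 : ℝ)..1, ‖weightedVorticity f Φ y‖ ^ 2 ≤ 2 * R) :
    ‖weightedVorticity f Φ 0 - weightedVorticity f Φ a‖ ^ 2 / a ≤ 13000 * R := by
  have hg := h.contDiff_weightedVorticity
  have ha1 : a ≤ 1 := by linarith
  have hfK := integral_norm_deriv_sq_le_energy_of_subset h.contDiff_f k ha.le ha1 le_rfl
  have hfN := mul_integral_norm_sq_le_energy zero_le_one k f
  have hKout := integral_norm_sq_nonneg ha1 (deriv (weightedVorticity f Φ))
  have hD := integral_norm_sq_nonneg ha.le (hardyDefect (a ^ 2 + δ) a (weightedVorticity f Φ))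
  have hN := mul_nonneg (sq_nonneg k) (integral_norm_sq_nonneg zero_le_one (weightedVorticity f Φ))
  have hΦ' := integral_norm_sq_le_of_two_mul_eq_add ha1 hg.continuous_deriv_one
    h.contDiff_f.continuous_deriv_one h.two_mul_deriv
  have hΦ := mul_le_mul_of_nonneg_left (integral_norm_sq_le_of_two_mul_eq_add zero_le_one
    hg.continuous h.contDiff_f.continuous (two_mul_eq_weightedVorticity_add f Φ)) (sq_nonneg k)
  have hjump := h.norm_sub_sq_le_of_deriv_eq_zero (R := R) hδ hk ha haa hδa h2a hka h0
    (by linarith) (by linarith) him (by linarith)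
    (by rw [mul_comm]; exact (div_le_iff₀ ha).1 hΓ) (by linarith)
  rw [div_le_iff₀ ha]
  linarith

theorem norm_sub_sq_div_le (h : HalfRayleigh k lam δ f W Φ) (hδ : 0 < δ) (hk : 1 ≤ k) (ha : 0 < a)
    (haa : a ^ 2 = 1 - lam) (hδa : δ ≤ a ^ 2) (hb : b = min a 1)
    (hΓ : ‖weightedVorticity f Φ b‖ ^ 2 / a ≤ R) (hf : energy 0 1 k f ≤ R)
    (him : ∫ y in (0 : ℝ)..1, imKernel a δ y * ‖weightedVorticity f Φ y‖ ^ 2 ≤ R)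
    (hR : (∫ y in b..1, ‖deriv (weightedVorticity f Φ) y‖ ^ 2)
        + (∫ y in (0 : ℝ)..b, ‖hardyDefect (a ^ 2 + δ) b (weightedVorticity f Φ) y‖ ^ 2)
        + k ^ 2 * ∫ y in (0 : ℝ)..1, ‖weightedVorticity f Φ y‖ ^ 2 ≤ 2 * R) :
    ‖weightedVorticity f Φ 0 - weightedVorticity f Φ b‖ ^ 2 / a
      ≤ energy 0 1 k (weightedVorticity f Φ) / 24 + 13000 * R := by
  have hE := energy_nonneg zero_le_one k (weightedVorticity f Φ)
  have hR0 : 0 ≤ R := (energy_nonneg zero_le_one k f).trans hf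
  rcases h.weightedVorticity_zero_or with h0 | h0
  · rw [h0, zero_sub, norm_neg]
    linarith
  rcases le_or_gt (1 / 2) (k * a) with hka | hka
  · have hb0 : 0 ≤ b := hb ▸ le_min ha.le zero_le_one
    have hKout := integral_norm_sq_nonneg (hb ▸ min_le_right a 1 : b ≤ 1)
      (deriv (weightedVorticity f Φ))
    have hD := integral_norm_sq_nonneg hb0 (hardyDefect (a ^ 2 + δ) b (weightedVorticity f Φ))
    linarith [norm_sub_sq_div_le_of_half_le h.contDiff_weightedVorticity h.weightedVorticity_one
      ha hka b]
  · have h2a : 2 * a ≤ 1 := by nlinarith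
    obtain rfl : b = a := hb.trans (min_eq_left (by linarith))
    linarith [h.norm_sub_sq_le_of_deriv_zero_eq_zero hδ (by linarith) ha haa hδa h2a hka.le h0 hΓ
      hf him hR]

theorem energy_weightedVorticity_le (h : HalfRayleigh k lam δ f W Φ) (hδ : 0 < δ) (hk : 1 ≤ k)
    (ha : 0 < a) (haa : a ^ 2 = 1 - lam) (hδa : δ ≤ a ^ 2) (hb : b = min a 1) :
    energy 0 1 k (weightedVorticity f Φ)
      ≤ 45000 * (3 * (energy 0 1 k f
          + √(energy 0 1 k (weightedVorticity f Φ)) * √(energy 0 1 k f))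
        + 9 * (‖weightedVorticity f Φ b‖ ^ 2 / a)
        + 8 * (√(‖weightedVorticity f Φ b‖ ^ 2 / a)
          * √(energy 0 1 k (weightedVorticity f Φ)))) := by
  have hb0 : 0 ≤ b := hb ▸ le_min ha.le zero_le_one
  have him := h.integral_imKernel_le hδ haa
  have hR := h.integral_deriv_add_hardyDefect_add_le hδ ha haa hb
  have hF := energy_nonneg zero_le_one k f
  have hE := energy_nonneg zero_le_one k (weightedVorticity f Φ)
  have hΓ : 0 ≤ ‖weightedVorticity f Φ b‖ ^ 2 / a := by positivity
  have hEF : 0 ≤ √(energy 0 1 k (weightedVorticity f Φ)) * √(energy 0 1 k f) := by positivity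
  have hΓE : 0 ≤ √(‖weightedVorticity f Φ b‖ ^ 2 / a)
      * √(energy 0 1 k (weightedVorticity f Φ)) := by positivity
  set R := 3 * (energy 0 1 k f + √(energy 0 1 k (weightedVorticity f Φ)) * √(energy 0 1 k f))
    + 9 * (‖weightedVorticity f Φ b‖ ^ 2 / a)
    + 8 * (√(‖weightedVorticity f Φ b‖ ^ 2 / a) * √(energy 0 1 k (weightedVorticity f Φ)))
  have hR2 := hR.trans (show _ ≤ 2 * R by linarith)
  have hjump := h.norm_sub_sq_div_le (R := R) hδ hk ha haa hδa hb (by linarith) (by linarith)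
    (by linarith) hR2
  linarith [energy_le_hardyDefect (k := k) h.contDiff_weightedVorticity hδ ha hb0
    (hb ▸ min_le_left a 1) (hb ▸ min_le_right a 1)]

end HalfRayleigh

end CoercivityBound

section HalfIntervalBounds

variable {k lam δ y : ℝ} {f W Φ : ℝ → ℂ}

theorem le_mul_of_sq_le_add {h F Γ : ℝ} (hh : 0 ≤ h) (hF : 0 ≤ F) (hΓ0 : 0 ≤ Γ)
    (hΓ : Γ ≤ 5 * (h * F) + 2 / 10 ^ 12 * h ^ 2)
    (hle : h ^ 2 ≤ 45000 * (3 * (F ^ 2 + h * F) + 9 * Γ + 8 * (√Γ * h))) :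
    h ≤ 2 * 10 ^ 12 * F := by
  have hyoung : 360000 * (√Γ * h) ≤ h ^ 2 / 2 + 360000 ^ 2 / 2 * Γ := by
    linarith [sq_nonneg (h - 360000 * √Γ), Real.sq_sqrt hΓ0]
  have hhF : 0 ≤ h * F := mul_nonneg hh hF
  have hsq : h ^ 2 ≤ 10 ^ 12 * (F ^ 2 + h * F) := by linarith [sq_nonneg F, sq_nonneg h]
  by_contra! hlt
  nlinarith

namespace HalfRayleigh

theorem sqrt_energy_weightedVorticity_le (h : HalfRayleigh k lam δ f W Φ) (hδ : 0 < δ)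
    (hk : 1 ≤ k) :
    √(energy 0 1 k (weightedVorticity f Φ)) ≤ 2 * 10 ^ 12 * √(energy 0 1 k f) := by
  have hH := Real.sq_sqrt (energy_nonneg zero_le_one k (weightedVorticity f Φ))
  have hF := Real.sq_sqrt (energy_nonneg zero_le_one k f)
  rcases le_or_gt (1 - lam) (10 ^ 12 * δ) with hsmall | hlarge
  · have hW := h.contDiff_W.continuous
    have hweight : ∫ y in (0 : ℝ)..1, (1 - y ^ 2 - lam) * ‖W y‖ ^ 2
        ≤ 10 ^ 12 * (δ * ∫ y in (0 : ℝ)..1, ‖W y‖ ^ 2) := by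
      rw [← mul_assoc, ← intervalIntegral.integral_const_mul]
      refine intervalIntegral.integral_mono_on zero_le_one
        (Continuous.intervalIntegrable (by fun_prop) _ _)
        (Continuous.intervalIntegrable (by fun_prop) _ _) fun y _ => ?_
      exact mul_le_mul_of_nonneg_right (by linarith [sq_nonneg y]) (sq_nonneg _)
    have hre := (abs_le.1 h.abs_two_mul_integral_mul_norm_sq_sub_le).1
    have him := h.two_mul_integral_norm_sq_le
    by_contra! hlt
    nlinarith [Real.sqrt_nonneg (energy 0 1 k f)]
  · have hpos : 0 < 1 - lam := lt_trans (by positivity) hlarge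
    have haa : √(1 - lam) ^ 2 = 1 - lam := Real.sq_sqrt hpos.le
    have ha : 0 < √(1 - lam) := Real.sqrt_pos.2 hpos
    have hle := h.energy_weightedVorticity_le hδ hk ha haa (by linarith) rfl
    have hΓ := h.norm_sq_div_le (M := 10 ^ 12) hδ ha haa rfl (by norm_num) (by linarith)
    refine le_mul_of_sq_le_add (Real.sqrt_nonneg _) (Real.sqrt_nonneg _)
      (Γ := ‖weightedVorticity f Φ (min √(1 - lam) 1)‖ ^ 2 / √(1 - lam)) (by positivity) ?_ ?_
    · rwa [hH]
    · rwa [hH, hF]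

theorem energy_le_mul (h : HalfRayleigh k lam δ f W Φ) (hδ : 0 < δ) (hk : 1 ≤ k) :
    energy 0 1 k Φ ≤ (2 * 10 ^ 12) ^ 2 * energy 0 1 k f := by
  have hf := energy_nonneg zero_le_one k f
  have hH := pow_le_pow_left₀ (Real.sqrt_nonneg _) (h.sqrt_energy_weightedVorticity_le hδ hk) 2
  rw [mul_pow, Real.sq_sqrt (energy_nonneg zero_le_one k _), Real.sq_sqrt hf] at hH
  linarith [h.energy_le]

theorem sqrt_energy_mul_sqrt_energy_le (h : HalfRayleigh k lam δ f W Φ) (hδ : 0 < δ)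
    (hk : 1 ≤ k) :
    √(energy 0 1 k (weightedVorticity f Φ)) * √(energy 0 1 k f)
      ≤ 2 * 10 ^ 12 * energy 0 1 k f := by
  calc _ ≤ 2 * 10 ^ 12 * √(energy 0 1 k f) * √(energy 0 1 k f) :=
        mul_le_mul_of_nonneg_right (h.sqrt_energy_weightedVorticity_le hδ hk) (Real.sqrt_nonneg _)
    _ = _ := by rw [mul_assoc, Real.mul_self_sqrt (energy_nonneg zero_le_one k f)]

theorem mul_integral_norm_sq_le (h : HalfRayleigh k lam δ f W Φ) (hδ : 0 < δ) (hk : 1 ≤ k) :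
    δ * ∫ y in (0 : ℝ)..1, ‖W y‖ ^ 2 ≤ 10 ^ 12 * energy 0 1 k f := by
  linarith [h.two_mul_integral_norm_sq_le, h.sqrt_energy_mul_sqrt_energy_le hδ hk]

theorem mul_integral_sq_mul_norm_sq_le (h : HalfRayleigh k lam δ f W Φ) (hδ : 0 < δ)
    (hk : 1 ≤ k) :
    δ * ∫ y in (0 : ℝ)..1, y ^ 2 * ‖W y‖ ^ 2
      ≤ (|1 - lam| + δ) * (10 ^ 12 * energy 0 1 k f) := by
  have hW := h.contDiff_W.continuous
  have hsplit : ∫ y in (0 : ℝ)..1, y ^ 2 * ‖W y‖ ^ 2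
      = (1 - lam) * (∫ y in (0 : ℝ)..1, ‖W y‖ ^ 2)
        - ∫ y in (0 : ℝ)..1, (1 - y ^ 2 - lam) * ‖W y‖ ^ 2 := by
    rw [← intervalIntegral.integral_const_mul, ← intervalIntegral.integral_sub
      (Continuous.intervalIntegrable (by fun_prop) _ _)
      (Continuous.intervalIntegrable (by fun_prop) _ _)]
    exact intervalIntegral.integral_congr fun y _ => by ring
  have hre := (abs_le.1 h.abs_two_mul_integral_mul_norm_sq_sub_le).1
  have hrest : -(10 ^ 12 * energy 0 1 k f)
      ≤ ∫ y in (0 : ℝ)..1, (1 - y ^ 2 - lam) * ‖W y‖ ^ 2 := by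
    linarith [h.sqrt_energy_mul_sqrt_energy_le hδ hk,
      energy_nonneg zero_le_one k (weightedVorticity f Φ)]
  calc δ * ∫ y in (0 : ℝ)..1, y ^ 2 * ‖W y‖ ^ 2
      = (1 - lam) * (δ * ∫ y in (0 : ℝ)..1, ‖W y‖ ^ 2)
        - δ * ∫ y in (0 : ℝ)..1, (1 - y ^ 2 - lam) * ‖W y‖ ^ 2 := by rw [hsplit]; ring
    _ ≤ |1 - lam| * (δ * ∫ y in (0 : ℝ)..1, ‖W y‖ ^ 2) - δ * -(10 ^ 12 * energy 0 1 k f) := by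
        refine sub_le_sub (mul_le_mul_of_nonneg_right (le_abs_self _) ?_)
          (mul_le_mul_of_nonneg_left hrest hδ.le)
        exact mul_nonneg hδ.le (integral_norm_sq_nonneg zero_le_one W)
    _ ≤ |1 - lam| * (10 ^ 12 * energy 0 1 k f) - δ * -(10 ^ 12 * energy 0 1 k f) :=
        sub_le_sub_right
          (mul_le_mul_of_nonneg_left (h.mul_integral_norm_sq_le hδ hk) (abs_nonneg _)) _
    _ = _ := by ring

theorem mul_deriv_eq (h : HalfRayleigh k lam δ f W Φ) (hy : y ∈ Set.Ioo (0 : ℝ) 1) :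
    ((1 : ℂ) - (y : ℂ) ^ 2 - (lam : ℂ) + Complex.I * (δ : ℂ)) * deriv W y
      = 2 * (y : ℂ) * W y - 2 * deriv Φ y + deriv f y := by
  have hcoeff : HasDerivAt (fun y : ℝ => (1 : ℂ) - (y : ℂ) ^ 2 - (lam : ℂ)
      + Complex.I * (δ : ℂ)) (-(2 * (y : ℂ))) y := by
    simpa using (((hasDerivAt_id y).ofReal_comp.pow 2).const_sub (1 : ℂ)).sub_const (lam : ℂ)
      |>.add_const (Complex.I * (δ : ℂ))
  have hlhs := (hcoeff.mul (h.contDiff_W.differentiable_one y).hasDerivAt).add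
    ((h.contDiff_Φ.differentiable two_ne_zero y).hasDerivAt.const_mul (2 : ℂ))
  have heq := hlhs.congr_of_eventuallyEq (f₁ := f) <| by
    filter_upwards [isOpen_Ioo.mem_nhds hy] with z hz
    exact (h.rayleigh_eq z (Set.Ioo_subset_Icc_self hz)).symm
  linear_combination heq.unique (h.contDiff_f.differentiable_one y).hasDerivAt

theorem sq_mul_norm_deriv_sq_le (h : HalfRayleigh k lam δ f W Φ) (hδ : 0 < δ)
    (hy : y ∈ Set.Ioo (0 : ℝ) 1) :
    δ ^ 2 * ‖deriv W y‖ ^ 2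
      ≤ 12 * (y ^ 2 * ‖W y‖ ^ 2) + 12 * ‖deriv Φ y‖ ^ 2 + 3 * ‖deriv f y‖ ^ 2 := by
  have hcoeff : δ ≤ ‖(1 : ℂ) - (y : ℂ) ^ 2 - (lam : ℂ) + Complex.I * (δ : ℂ)‖ := by
    convert Complex.im_le_norm _
    simp [← Complex.ofReal_pow]
  have hle : δ * ‖deriv W y‖ ≤ 2 * y * ‖W y‖ + 2 * ‖deriv Φ y‖ + ‖deriv f y‖ := by
    calc δ * ‖deriv W y‖ ≤ _ := mul_le_mul_of_nonneg_right hcoeff (norm_nonneg _)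
      _ = ‖2 * (y : ℂ) * W y - 2 * deriv Φ y + deriv f y‖ := by
        rw [← norm_mul, h.mul_deriv_eq hy]
      _ ≤ ‖2 * (y : ℂ) * W y‖ + ‖2 * deriv Φ y‖ + ‖deriv f y‖ :=
        (norm_add_le _ _).trans (add_le_add_left (norm_sub_le _ _) _)
      _ = _ := by simp [abs_of_pos hy.1]
  have hsq := pow_le_pow_left₀ (by positivity) hle 2
  rw [mul_pow] at hsq
  linarith [sq_nonneg (2 * y * ‖W y‖ - 2 * ‖deriv Φ y‖),
    sq_nonneg (2 * y * ‖W y‖ - ‖deriv f y‖), sq_nonneg (2 * ‖deriv Φ y‖ - ‖deriv f y‖)]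

theorem sq_mul_integral_norm_deriv_sq_le (h : HalfRayleigh k lam δ f W Φ) (hδ : 0 < δ) :
    δ ^ 2 * ∫ y in (0 : ℝ)..1, ‖deriv W y‖ ^ 2
      ≤ 12 * (∫ y in (0 : ℝ)..1, y ^ 2 * ‖W y‖ ^ 2) + 12 * energy 0 1 k Φ
        + 3 * energy 0 1 k f := by
  have hW := h.contDiff_W.continuous
  have hW' := h.contDiff_W.continuous_deriv_one
  have hf' := h.contDiff_f.continuous_deriv_one
  have hΦ' := h.contDiff_Φ.continuous_deriv one_le_two
  have hint {u : ℝ → ℝ} (hu : Continuous u) : IntervalIntegrable u volume 0 1 :=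
    hu.intervalIntegrable _ _
  have hle : ∫ y in (0 : ℝ)..1, δ ^ 2 * ‖deriv W y‖ ^ 2
      ≤ ∫ y in (0 : ℝ)..1,
        (12 * (y ^ 2 * ‖W y‖ ^ 2) + 12 * ‖deriv Φ y‖ ^ 2 + 3 * ‖deriv f y‖ ^ 2) :=
    intervalIntegral.integral_mono_on_of_le_Ioo zero_le_one (hint (by fun_prop))
      (hint (by fun_prop)) fun y hy => h.sq_mul_norm_deriv_sq_le hδ hy
  rw [intervalIntegral.integral_add (hint (by fun_prop)) (hint (by fun_prop)),
    intervalIntegral.integral_add (hint (by fun_prop)) (hint (by fun_prop))] at hle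
  simp only [intervalIntegral.integral_const_mul] at hle
  linarith [integral_norm_deriv_sq_le_energy zero_le_one k Φ,
    integral_norm_deriv_sq_le_energy zero_le_one k f]

theorem pow_mul_integral_norm_deriv_sq_le (h : HalfRayleigh k lam δ f W Φ) (hδ : 0 < δ)
    (hk : 1 ≤ k) :
    δ ^ 3 * ∫ y in (0 : ℝ)..1, ‖deriv W y‖ ^ 2
      ≤ (8 * 10 ^ 12) ^ 2 * (|1 - lam| + δ) * energy 0 1 k f := by
  have hf := energy_nonneg zero_le_one k f
  have hY := h.mul_integral_sq_mul_norm_sq_le hδ hk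
  have hW' := mul_le_mul_of_nonneg_left (h.sq_mul_integral_norm_deriv_sq_le hδ) hδ.le
  have hΦ := mul_le_mul_of_nonneg_left (h.energy_le_mul hδ hk) hδ.le
  have hδf : δ * energy 0 1 k f ≤ (|1 - lam| + δ) * energy 0 1 k f :=
    mul_le_mul_of_nonneg_right (le_add_of_nonneg_left (abs_nonneg _)) hf
  linarith [mul_nonneg hδ.le hf]

end HalfRayleigh

end HalfIntervalBounds

section Reflection

variable {k lam δ ε : ℝ} {u f W Φ : ℝ → ℂ}

/-- Twice the even part of `u` for `ε = 1` and twice its odd part for `ε = -1`. -/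
def reflSum (ε : ℝ) (u : ℝ → ℂ) (y : ℝ) : ℂ := u y + ε * u (-y)

theorem contDiff_reflSum {n : WithTop ℕ∞} (hu : ContDiff ℝ n u) (ε : ℝ) :
    ContDiff ℝ n (reflSum ε u) :=
  hu.add (contDiff_const.mul (hu.comp contDiff_neg))

theorem deriv_reflSum (hu : Differentiable ℝ u) (ε : ℝ) :
    deriv (reflSum ε u) = reflSum (-ε) (deriv u) := by
  ext y
  have hneg : HasDerivAt (fun y => u (-y)) (-deriv u (-y)) y := by
    simpa [Function.comp_def] using (hu (-y)).hasDerivAt.scomp y (hasDerivAt_neg y)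
  rw [show deriv (reflSum ε u) y = deriv u y + ε * -deriv u (-y) from
    ((hu y).hasDerivAt.add (hneg.const_mul (ε : ℂ))).deriv]
  simp only [reflSum, Complex.ofReal_neg, mul_neg, neg_mul]

theorem reflSum_neg_one_zero (u : ℝ → ℂ) : reflSum (-1) u 0 = 0 := by simp [reflSum]

theorem norm_reflSum_sq_add (u : ℝ → ℂ) (y : ℝ) :
    ‖reflSum 1 u y‖ ^ 2 + ‖reflSum (-1) u y‖ ^ 2 = 2 * (‖u y‖ ^ 2 + ‖u (-y)‖ ^ 2) := by
  simpa [reflSum, sq, sub_eq_add_neg] using parallelogram_law_with_norm ℝ (u y) (u (-y))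

theorem integral_norm_reflSum_sq_add (hu : Continuous u) :
    (∫ y in (0 : ℝ)..1, ‖reflSum 1 u y‖ ^ 2) + ∫ y in (0 : ℝ)..1, ‖reflSum (-1) u y‖ ^ 2
      = 2 * ∫ y in (-1 : ℝ)..1, ‖u y‖ ^ 2 := by
  have hc (ε : ℝ) : Continuous (reflSum ε u) := by unfold reflSum; fun_prop
  have hint {v : ℝ → ℝ} (hv : Continuous v) (x y : ℝ) : IntervalIntegrable v volume x y :=
    hv.intervalIntegrable _ _
  rw [← intervalIntegral.integral_add (hint (by fun_prop) _ _) (hint (by fun_prop) _ _)]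
  simp only [norm_reflSum_sq_add]
  rw [intervalIntegral.integral_const_mul,
    intervalIntegral.integral_add (hint (by fun_prop) _ _) (hint (by fun_prop) _ _),
    intervalIntegral.integral_comp_neg (fun y => ‖u y‖ ^ 2), neg_zero, add_comm,
    intervalIntegral.integral_add_adjacent_intervals
      (hint (by fun_prop) _ _) (hint (by fun_prop) _ _)]

theorem integral_norm_deriv_reflSum_sq_add (hu : ContDiff ℝ 1 u) :
    (∫ y in (0 : ℝ)..1, ‖deriv (reflSum 1 u) y‖ ^ 2)
      + ∫ y in (0 : ℝ)..1, ‖deriv (reflSum (-1) u) y‖ ^ 2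
      = 2 * ∫ y in (-1 : ℝ)..1, ‖deriv u y‖ ^ 2 := by
  rw [deriv_reflSum hu.differentiable_one, deriv_reflSum hu.differentiable_one, neg_neg, add_comm]
  exact integral_norm_reflSum_sq_add hu.continuous_deriv_one

theorem energy_reflSum_add (k : ℝ) (hu : ContDiff ℝ 1 u) :
    energy 0 1 k (reflSum 1 u) + energy 0 1 k (reflSum (-1) u) = 2 * energy (-1) 1 k u := by
  unfold energy
  linear_combination integral_norm_deriv_reflSum_sq_add hu
    + k ^ 2 * integral_norm_reflSum_sq_add hu.continuous

/-- A classical solution of the Rayleigh problem on `[-1, 1]`, for a real wave number `k` in place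
of `|k|`. -/
structure Rayleigh (k lam δ : ℝ) (f W Φ : ℝ → ℂ) : Prop where
  contDiff_f : ContDiff ℝ 1 f
  contDiff_W : ContDiff ℝ 1 W
  contDiff_Φ : ContDiff ℝ 2 Φ
  f_neg_one : f (-1) = 0
  f_one : f 1 = 0
  Φ_neg_one : Φ (-1) = 0
  Φ_one : Φ 1 = 0
  rayleigh_eq : ∀ y ∈ Set.Icc (-1 : ℝ) 1,
    ((1 : ℂ) - (y : ℂ) ^ 2 - (lam : ℂ) + Complex.I * (δ : ℂ)) * W y + 2 * Φ y = f y
  vorticity_eq : ∀ y ∈ Set.Icc (-1 : ℝ) 1, deriv (deriv Φ) y - (k : ℂ) ^ 2 * Φ y = W y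

namespace Rayleigh

theorem halfRayleigh_reflSum (h : Rayleigh k lam δ f W Φ) (hε : ε = 1 ∨ ε = -1) :
    HalfRayleigh k lam δ (reflSum ε f) (reflSum ε W) (reflSum ε Φ) where
  contDiff_f := contDiff_reflSum h.contDiff_f ε
  contDiff_W := contDiff_reflSum h.contDiff_W ε
  contDiff_Φ := contDiff_reflSum h.contDiff_Φ ε
  f_one := by simp only [reflSum, h.f_one, h.f_neg_one, mul_zero, add_zero]
  Φ_one := by simp only [reflSum, h.Φ_one, h.Φ_neg_one, mul_zero, add_zero]
  rayleigh_eq y hy := by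
    have hpos := h.rayleigh_eq y ⟨by linarith [hy.1], hy.2⟩
    have hneg := h.rayleigh_eq (-y) ⟨by linarith [hy.2], by linarith [hy.1]⟩
    rw [Complex.ofReal_neg, neg_sq] at hneg
    simp only [reflSum]
    linear_combination hpos + (ε : ℂ) * hneg
  vorticity_eq y hy := by
    have hpos := h.vorticity_eq y ⟨by linarith [hy.1], hy.2⟩
    have hneg := h.vorticity_eq (-y) ⟨by linarith [hy.2], by linarith [hy.1]⟩
    have hΦ' : ContDiff ℝ 1 (deriv Φ) := h.contDiff_Φ.deriv'
    rw [deriv_reflSum (h.contDiff_Φ.differentiable two_ne_zero),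
      deriv_reflSum hΦ'.differentiable_one, neg_neg]
    simp only [reflSum]
    linear_combination hpos + (ε : ℂ) * hneg
  parity := by
    rw [deriv_reflSum (h.contDiff_Φ.differentiable two_ne_zero)]
    rcases hε with rfl | rfl
    · exact .inl (reflSum_neg_one_zero _)
    · exact .inr ⟨reflSum_neg_one_zero _, reflSum_neg_one_zero _⟩

theorem energy_le (h : Rayleigh k lam δ f W Φ) (hδ : 0 < δ) (hk : 1 ≤ k) :
    energy (-1) 1 k Φ ≤ (2 * 10 ^ 12) ^ 2 * energy (-1) 1 k f := by
  linarith [(h.halfRayleigh_reflSum (.inl rfl)).energy_le_mul hδ hk,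
    (h.halfRayleigh_reflSum (.inr rfl)).energy_le_mul hδ hk,
    energy_reflSum_add k (h.contDiff_Φ.of_le one_le_two), energy_reflSum_add k h.contDiff_f]

theorem mul_integral_norm_sq_le (h : Rayleigh k lam δ f W Φ) (hδ : 0 < δ) (hk : 1 ≤ k) :
    δ * ∫ y in (-1 : ℝ)..1, ‖W y‖ ^ 2 ≤ (2 * 10 ^ 12) ^ 2 * energy (-1) 1 k f := by
  linarith [(h.halfRayleigh_reflSum (.inl rfl)).mul_integral_norm_sq_le hδ hk,
    (h.halfRayleigh_reflSum (.inr rfl)).mul_integral_norm_sq_le hδ hk,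
    congrArg (δ * ·) (integral_norm_reflSum_sq_add h.contDiff_W.continuous),
    energy_reflSum_add k h.contDiff_f, energy_nonneg (by norm_num : (-1 : ℝ) ≤ 1) k f]

theorem pow_mul_integral_norm_deriv_sq_le (h : Rayleigh k lam δ f W Φ) (hδ : 0 < δ)
    (hk : 1 ≤ k) :
    δ ^ 3 * ∫ y in (-1 : ℝ)..1, ‖deriv W y‖ ^ 2
      ≤ (8 * 10 ^ 12) ^ 2 * (|1 - lam| + δ) * energy (-1) 1 k f := by
  linarith [(h.halfRayleigh_reflSum (.inl rfl)).pow_mul_integral_norm_deriv_sq_le hδ hk,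
    (h.halfRayleigh_reflSum (.inr rfl)).pow_mul_integral_norm_deriv_sq_le hδ hk,
    congrArg (δ ^ 3 * ·) (integral_norm_deriv_reflSum_sq_add h.contDiff_W),
    congrArg ((8 * 10 ^ 12) ^ 2 * (|1 - lam| + δ) * ·) (energy_reflSum_add k h.contDiff_f)]

theorem rpow_mul_l2_deriv_le (h : Rayleigh k lam δ f W Φ) (hδ : 0 < δ) (hk : 1 ≤ k) :
    δ ^ ((3 : ℝ) / 2) * (|1 - lam| + δ) ^ (-(1 : ℝ) / 2) * l2 (deriv W)
      ≤ 8 * 10 ^ 12 * √(energy (-1) 1 k f) := by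
  have hr : 0 < |1 - lam| + δ := add_pos_of_nonneg_of_pos (abs_nonneg _) hδ
  have hδ_sqrt : δ ^ ((3 : ℝ) / 2) = √(δ ^ 3) := by
    rw [Real.sqrt_eq_rpow, ← Real.rpow_natCast_mul hδ.le]; norm_num
  have hr_sqrt : (|1 - lam| + δ) ^ (-(1 : ℝ) / 2) = √((|1 - lam| + δ)⁻¹) := by
    rw [Real.sqrt_inv, neg_div, Real.rpow_neg hr.le, ← Real.sqrt_eq_rpow]
  rw [l2, hδ_sqrt, hr_sqrt, ← Real.sqrt_mul (by positivity), ← Real.sqrt_mul (by positivity)]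
  refine Real.sqrt_le_iff.2 ⟨by positivity, ?_⟩
  rw [mul_pow, Real.sq_sqrt (energy_nonneg (by norm_num) k f), mul_right_comm,
    ← div_eq_mul_inv, div_le_iff₀ hr, mul_right_comm]
  exact h.pow_mul_integral_norm_deriv_sq_le hδ hk

end Rayleigh

end Reflection

theorem rayleigh_resolvent_general {k lam δ : ℝ} {f W Φ : ℝ → ℂ}
    (h : Rayleigh k lam δ f W Φ) (hδ : 0 < δ) (hk : 1 ≤ k) :
    √(energy (-1) 1 k Φ) + √δ * l2 W
      + δ ^ ((3 : ℝ) / 2) * (|1 - lam| + δ) ^ (-(1 : ℝ) / 2) * l2 (deriv W)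
      ≤ 2 * 10 ^ 13 * √(energy (-1) 1 k f) := by
  have hsqrt {x : ℝ} (hx : x ≤ (2 * 10 ^ 12) ^ 2 * energy (-1) 1 k f) :
      √x ≤ 2 * 10 ^ 12 * √(energy (-1) 1 k f) := by
    refine (Real.sqrt_le_sqrt hx).trans_eq ?_
    rw [Real.sqrt_mul (sq_nonneg _), Real.sqrt_sq (by norm_num)]
  have hΦ := hsqrt (h.energy_le hδ hk)
  have hW := hsqrt (h.mul_integral_norm_sq_le hδ hk)
  rw [Real.sqrt_mul hδ.le, ← l2] at hW
  linarith [h.rpow_mul_l2_deriv_le hδ hk, Real.sqrt_nonneg (energy (-1) 1 k f)]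

/-- **Resolvent estimate for the Rayleigh equation of the Poiseuille flow**
(Lemma 2.4):  for the problem `(1-y²-λ+iδ)W + 2Φ = f`, `(∂_y²-|k|²)Φ = W`,
`Φ(±1) = 0` with `f(±1) = 0` and `0 < δ ≤ δ₀`:
`‖(∂_y,|k|)Φ‖ + δ^{1/2}‖W‖ + δ^{3/2}(|1-λ|+δ)^{-1/2}‖W'‖ ≤ C‖(∂_y,|k|)f‖`. -/
theorem rayleigh_resolvent :
    ∃ δ₀ C : ℝ, 0 < δ₀ ∧ δ₀ < 1 ∧ 0 < C ∧
      ∀ (lam δ : ℝ) (k₁ k₃ : ℤ) (f W Φ : ℝ → ℂ),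
        0 < δ → δ ≤ δ₀ → 1 ≤ kabs k₁ k₃ →
        ContDiff ℝ 1 f → f (-1) = 0 → f 1 = 0 →
        ContDiff ℝ 1 W → ContDiff ℝ 2 Φ →
        (∀ y ∈ Set.Icc (-1:ℝ) 1,
          ((1 : ℂ) - (y : ℂ) ^ 2 - (lam : ℂ) + Complex.I * (δ : ℂ)) * W y
            + 2 * Φ y = f y) →
        (∀ y ∈ Set.Icc (-1:ℝ) 1,
          deriv (deriv Φ) y - ((kabs k₁ k₃ : ℝ) : ℂ) ^ 2 * Φ y = W y) →
        Φ (-1) = 0 → Φ 1 = 0 →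
        hk k₁ k₃ Φ + Real.sqrt δ * l2 W
          + δ ^ ((3:ℝ)/2) * (|1 - lam| + δ) ^ (-(1:ℝ)/2) * l2 (deriv W)
          ≤ C * hk k₁ k₃ f := by
  refine ⟨1 / 2, 2 * 10 ^ 13, by norm_num, by norm_num, by norm_num, ?_⟩
  intro lam δ k₁ k₃ f W Φ hδ _ hk hf hf_neg hf_one hW hΦ hR hV hΦ_neg hΦ_one
  exact rayleigh_resolvent_general ⟨hf, hW, hΦ, hf_neg, hf_one, hΦ_neg, hΦ_one, hR, hV⟩ hδ hk

end
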